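/- Fix γ, δ > 0 and κ ∈ (0,1). Then there exist constants b > 0, ζ > 0 and a positive integer N₀ such that for every even integer N > N₀ and every even integer q with 2 < q < γ·N^{(1−δ)/6} and 2q < N, the following holds: with probability at least 1 − 2(q−2)/(N^ζ − 1) over the random couplings (J_X)_{X∈F}, the operator scrambling time of a single fermion satisfies t_{s,κ} := inf{ t > 0 : Σ_{l=0}^{N′} l·P_l(t) ≥ κ·N′ } ≥ b·log N, where P_l(t) := (O(t)| Q_l O(t)) with O(t) := e^{iHt} ψ_1 e^{−iHt}. -/

import Mathlib

open Matrix

/-- The ordered product `ψ_Y = ∏_{i ∈ Y} ψ_i` (indices in increasing order), with `ψ_∅ = 1`. -/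
noncomputable def psiProd {N : ℕ} (ψ : Fin N → Matrix (Fin (2 ^ (N / 2))) (Fin (2 ^ (N / 2))) ℂ)
    (Y : Finset (Fin N)) : Matrix (Fin (2 ^ (N / 2))) (Fin (2 ^ (N / 2))) ℂ :=
  ((Y.sort (· ≤ ·)).map ψ).prod

/-- The inner product `(A|B) := 2^(−N/2) · tr(A† B)`. -/
noncomputable def mInner (N : ℕ) (A B : Matrix (Fin (2 ^ (N / 2))) (Fin (2 ^ (N / 2))) ℂ) : ℂ :=
  ((2 : ℂ) ^ (N / 2))⁻¹ * (Aᴴ * B).trace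

/-- The span of `{ψ_Y : |Y| = s}`, i.e. the space of operators of size `s`. -/
noncomputable def sizeSpan {N : ℕ} (ψ : Fin N → Matrix (Fin (2 ^ (N / 2))) (Fin (2 ^ (N / 2))) ℂ)
    (s : ℕ) : Submodule ℂ (Matrix (Fin (2 ^ (N / 2))) (Fin (2 ^ (N / 2))) ℂ) :=
  Submodule.span ℂ {M | ∃ Y : Finset (Fin N), Y.card = s ∧ M = psiProd ψ Y}

/-- `N′ := ⌈(N−1)/(q−2)⌉`. -/
def Nprime (N q : ℕ) : ℕ := (N + q - 4) / (q - 2)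

/-- The block `R_l` of operator sizes. -/
def blockR (N q l : ℕ) : Finset ℕ :=
  if l = 0 then {1}
  else if l < Nprime N q then Finset.Ioc ((l - 1) * (q - 2) + 1) (l * (q - 2) + 1)
  else Finset.Ioc ((Nprime N q - 1) * (q - 2) + 1) N

/-- The coupling magnitude `σ := [2q·C(N−1, q−1)]^{−1/2}`. -/
noncomputable def sykSigma (N q : ℕ) : ℝ :=
  (Real.sqrt (2 * q * ((N - 1).choose (q - 1))))⁻¹

/-- The SYK Hamiltonian `H = i^{q/2} Σ_{X∈F} J_X ψ_X`, where each coupling `J_X` is `±σ`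
according to the sign assignment `ε`. -/
noncomputable def sykH {N : ℕ} (q : ℕ)
    (ψ : Fin N → Matrix (Fin (2 ^ (N / 2))) (Fin (2 ^ (N / 2))) ℂ)
    (ε : {X : Finset (Fin N) // X.card = q} → Bool) :
    Matrix (Fin (2 ^ (N / 2))) (Fin (2 ^ (N / 2))) ℂ :=
  Complex.I ^ (q / 2) • ∑ X : {X : Finset (Fin N) // X.card = q},
    ((if ε X then sykSigma N q else -sykSigma N q : ℝ) : ℂ) • psiProd ψ X.1

/-- Heisenberg evolution `O(t) := e^{iHt} O₀ e^{−iHt}`. -/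
noncomputable def heis {N : ℕ} (H O₀ : Matrix (Fin (2 ^ (N / 2))) (Fin (2 ^ (N / 2))) ℂ)
    (t : ℝ) : Matrix (Fin (2 ^ (N / 2))) (Fin (2 ^ (N / 2))) ℂ :=
  NormedSpace.exp ((Complex.I * t) • H) * O₀ * NormedSpace.exp ((-(Complex.I * t)) • H)

abbrev SMat (N : ℕ) := Matrix (Fin (2 ^ (N / 2))) (Fin (2 ^ (N / 2))) ℂ

/-- The Majorana relations. -/
structure Maj {N : ℕ} (ψ : Fin N → SMat N) : Prop where
  herm : ∀ i, (ψ i).IsHermitian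
  anti : ∀ i j, ψ i * ψ j + ψ j * ψ i = (if i = j then (2 : ℂ) else 0) • (1 : SMat N)

namespace Maj

variable {N : ℕ} {ψ : Fin N → SMat N}

theorem sq (h : Maj ψ) (i : Fin N) : ψ i * ψ i = 1 := by
  have := h.anti i i
  rw [if_pos rfl, ← two_smul ℂ] at this
  exact smul_right_injective _ (two_ne_zero) this

theorem ac (h : Maj ψ) {i j : Fin N} (hij : i ≠ j) : ψ i * ψ j = -(ψ j * ψ i) := by
  have := h.anti i j
  rw [if_neg hij, zero_smul] at this
  exact eq_neg_of_add_eq_zero_left this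

end Maj

section alg
variable {N : ℕ} {ψ : Fin N → SMat N}

theorem psiProd_empty : psiProd ψ ∅ = 1 := by simp [psiProd]

theorem psiProd_insert {a : Fin N} {s : Finset (Fin N)} (h : ∀ x ∈ s, a < x) :
    psiProd ψ (insert a s) = ψ a * psiProd ψ s := by
  unfold psiProd
  rw [Finset.sort_insert _ (fun b hb => (h b hb).le) (fun ha => lt_irrefl _ (h a ha))]
  simp

theorem psiProd_singleton (i : Fin N) : psiProd ψ {i} = ψ i := by
  simp [psiProd]

theorem psi_mul_psiProd (h : Maj ψ) (i : Fin N) (Y : Finset (Fin N)) :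
    ∃ c : ℂ, ψ i * psiProd ψ Y = c • psiProd ψ (symmDiff {i} Y) := by
  induction Y using Finset.induction_on_min with
  | empty =>
    refine ⟨1, ?_⟩
    have : symmDiff ({i} : Finset (Fin N)) ∅ = {i} := by simp
    rw [this, psiProd_empty, psiProd_singleton]; simp
  | insert a s has ih =>
    have hna : a ∉ s := fun ha => lt_irrefl _ (has a ha)
    rcases lt_trichotomy i a with hia | rfl | hia
    · refine ⟨1, ?_⟩
      have : symmDiff {i} (insert a s) = insert i (insert a s) := by
        have h1 : i ∉ s := fun hi => lt_asymm hia (has i hi)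
        have h2 : i ≠ a := hia.ne
        ext x
        simp only [Finset.mem_symmDiff, Finset.mem_singleton, Finset.mem_insert]
        grind
      rw [this, psiProd_insert (a := i), one_smul]
      intro x hx
      rcases Finset.mem_insert.1 hx with rfl | hx
      · exact hia
      · exact hia.trans (has x hx)
    · refine ⟨1, ?_⟩
      have : symmDiff {i} (insert i s) = s := by
        ext x
        simp only [Finset.mem_symmDiff, Finset.mem_singleton, Finset.mem_insert]
        grind
      rw [this, psiProd_insert has, ← mul_assoc, h.sq, one_mul, one_smul]
    · obtain ⟨c, hc⟩ := ih
      refine ⟨-c, ?_⟩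
      have h2 : i ≠ a := hia.ne'
      have : symmDiff {i} (insert a s) = insert a (symmDiff {i} s) := by
        ext x
        simp only [Finset.mem_symmDiff, Finset.mem_singleton, Finset.mem_insert]
        grind
      rw [this, psiProd_insert has, psiProd_insert, ← mul_assoc, h.ac h2, neg_mul, mul_assoc, hc]
      · simp
      · intro x hx
        simp only [Finset.mem_symmDiff, Finset.mem_singleton] at hx
        rcases hx with hx | hx
        · exact hx.1 ▸ hia
        · exact has x hx.1

theorem psiProd_mul (h : Maj ψ) (X Y : Finset (Fin N)) :
    ∃ c : ℂ, psiProd ψ X * psiProd ψ Y = c • psiProd ψ (symmDiff X Y) := by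
  induction X using Finset.induction_on_min with
  | empty =>
    refine ⟨1, ?_⟩
    have : symmDiff (∅ : Finset (Fin N)) Y = Y := by simp
    rw [this, psiProd_empty]; simp
  | insert a s has ih =>
    have hna : a ∉ s := fun ha => lt_irrefl _ (has a ha)
    obtain ⟨c, hc⟩ := ih
    obtain ⟨c', hc'⟩ := psi_mul_psiProd h a (symmDiff s Y)
    refine ⟨c * c', ?_⟩
    have : symmDiff (insert a s) Y = symmDiff {a} (symmDiff s Y) := by
      rw [← symmDiff_assoc]
      congr 1
      ext x
      simp only [Finset.mem_symmDiff, Finset.mem_singleton, Finset.mem_insert]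
      grind
    rw [psiProd_insert has, mul_assoc, hc, mul_smul_comm, hc', smul_smul, this]

theorem psi_comm_psiProd (h : Maj ψ) (i : Fin N) (Y : Finset (Fin N)) :
    ψ i * psiProd ψ Y =
      ((-1 : ℂ) ^ (Y.card + if i ∈ Y then 1 else 0)) • (psiProd ψ Y * ψ i) := by
  induction Y using Finset.induction_on_min with
  | empty => simp [psiProd_empty]
  | insert a s has ih =>
    have hna : a ∉ s := fun ha => lt_irrefl _ (has a ha)
    rw [psiProd_insert has, Finset.card_insert_of_notMem hna]
    by_cases hia : i = a
    · subst hia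
      rw [if_neg hna] at ih
      rw [if_pos (Finset.mem_insert_self _ _), mul_assoc (ψ i), ih]
      rw [mul_smul_comm]
      congr 1
      rw [add_zero, pow_add, pow_add]; simp
    · have : (i ∈ insert a s) ↔ i ∈ s := by simp [hia]
      simp only [this]
      rw [← mul_assoc, h.ac hia, neg_mul, mul_assoc, ih, mul_smul_comm, ← neg_smul, mul_assoc]
      congr 1
      ring

theorem psiProd_conj (h : Maj ψ) (Y : Finset (Fin N)) :
    (psiProd ψ Y)ᴴ = ((-1 : ℂ) ^ (Y.card.choose 2)) • psiProd ψ Y := by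
  induction Y using Finset.induction_on_min with
  | empty => simp [psiProd_empty]
  | insert a s has ih =>
    have hna : a ∉ s := fun ha => lt_irrefl _ (has a ha)
    have h1 := psi_comm_psiProd h a s
    rw [if_neg hna, add_zero] at h1
    rw [psiProd_insert has, Finset.card_insert_of_notMem hna, conjTranspose_mul, ih, (h.herm a).eq,
      h1, smul_smul, smul_mul_assoc]
    congr 1
    rw [Nat.choose_succ_succ' s.card 1, Nat.choose_one_right, pow_add, mul_right_comm, ← pow_add,
      ← two_mul, pow_mul]
    simp

theorem psiProd_unitary (h : Maj ψ) (Y : Finset (Fin N)) :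
    (psiProd ψ Y)ᴴ * psiProd ψ Y = 1 := by
  induction Y using Finset.induction_on_min with
  | empty => simp [psiProd_empty]
  | insert a s has ih =>
    rw [psiProd_insert has, conjTranspose_mul, (h.herm a).eq, mul_assoc, ← mul_assoc (ψ a), h.sq,
      one_mul, ih]

theorem trace_eq_zero_of_anti (i : Fin N) (h : Maj ψ) (A : SMat N) (hA : ψ i * A = -(A * ψ i)) :
    A.trace = 0 := by
  have h1 : (ψ i * A * ψ i).trace = A.trace := by
    rw [trace_mul_comm, ← mul_assoc, h.sq, one_mul]
  have h2 : (ψ i * A * ψ i).trace = - A.trace := by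
    rw [hA, neg_mul, mul_assoc, h.sq, mul_one, trace_neg]
  rw [h1] at h2
  exact self_eq_neg.1 h2

theorem trace_psiProd (h : Maj ψ) (hN : Even N) (Y : Finset (Fin N)) (hY : Y.Nonempty) :
    (psiProd ψ Y).trace = 0 := by
  rcases Nat.even_or_odd Y.card with he | ho
  · obtain ⟨i, hi⟩ := hY
    refine trace_eq_zero_of_anti i h _ ?_
    rw [psi_comm_psiProd h, if_pos hi, pow_add, he.neg_one_pow]
    simp
  · have : ∃ i, i ∉ Y := by
      by_contra hc
      push Not at hc
      have : Y = Finset.univ := Finset.eq_univ_iff_forall.2 hc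
      rw [this, Finset.card_univ, Fintype.card_fin] at ho
      exact (Nat.not_even_iff_odd.2 ho) hN
    obtain ⟨i, hi⟩ := this
    refine trace_eq_zero_of_anti i h _ ?_
    rw [psi_comm_psiProd h, if_neg hi, add_zero, ho.neg_one_pow]
    simp

theorem mInner_psiProd (h : Maj ψ) (hN : Even N) {X Y : Finset (Fin N)} (hXY : X ≠ Y) :
    mInner N (psiProd ψ X) (psiProd ψ Y) = 0 := by
  obtain ⟨c, hc⟩ := psiProd_mul h X Y
  have : (symmDiff X Y).Nonempty := by
    rw [Finset.nonempty_iff_ne_empty]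
    intro h0
    exact hXY (symmDiff_eq_bot.1 h0)
  rw [mInner, psiProd_conj h, smul_mul_assoc, hc, trace_smul, trace_smul, trace_psiProd h hN _ this]
  simp

theorem psiProd_commute_psi (h : Maj ψ) {X : Finset (Fin N)} (hX : Even X.card) {i : Fin N}
    (hi : i ∉ X) : Commute (psiProd ψ X) (ψ i) := by
  have := psi_comm_psiProd h i X
  rw [if_neg hi, add_zero, hX.neg_one_pow, one_smul] at this
  exact this.symm

theorem psiProd_commute (h : Maj ψ) {X Y : Finset (Fin N)} (hX : Even X.card)
    (hXY : Disjoint X Y) : Commute (psiProd ψ X) (psiProd ψ Y) := by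
  conv => arg 2; unfold psiProd
  apply Commute.list_prod_right
  intro x hx
  obtain ⟨i, hi, rfl⟩ := List.mem_map.1 hx
  refine psiProd_commute_psi h hX ?_
  intro hiX
  exact Finset.disjoint_left.1 hXY hiX ((Finset.mem_sort _).1 hi)

/-- Hermitian form of one hyperedge term. -/
noncomputable def hX (ψ : Fin N → SMat N) (q : ℕ) (X : Finset (Fin N)) : SMat N :=
  Complex.I ^ (q / 2) • psiProd ψ X

theorem hX_herm (h : Maj ψ) {q : ℕ} (hq : Even q) {X : Finset (Fin N)} (hXq : X.card = q) :
    (hX ψ q X)ᴴ = hX ψ q X := by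
  obtain ⟨p, rfl⟩ := hq
  unfold hX
  rw [conjTranspose_smul, psiProd_conj h, hXq, smul_smul]
  congr 1
  have h1 : (p + p) / 2 = p := by omega
  have h2 : (p + p).choose 2 + p = 2 * (p * p) := by
    rw [Nat.choose_two_right]
    rcases p with _ | p
    · simp
    · have : (p + 1 + (p + 1)) * (p + 1 + (p + 1) - 1) = 2 * ((p + 1) * (2 * p + 1)) := by
        have : p + 1 + (p + 1) - 1 = 2 * p + 1 := by omega
        rw [this]; ring
      rw [this, Nat.mul_div_cancel_left _ (by norm_num)]
      ring
  rw [h1, star_pow]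
  have h3 : star Complex.I = (-1) * Complex.I := by simp
  have h4 : (-1 : ℂ) ^ p * (-1) ^ ((p + p).choose 2) = 1 := by
    rw [← pow_add, add_comm, h2, pow_mul]; simp
  rw [h3, mul_pow, mul_right_comm, h4, one_mul]

theorem hX_unitary (h : Maj ψ) {q : ℕ} (X : Finset (Fin N)) :
    (hX ψ q X)ᴴ * hX ψ q X = 1 := by
  unfold hX
  rw [conjTranspose_smul, smul_mul_assoc, mul_smul_comm, psiProd_unitary h, smul_smul, star_pow,
    ← mul_pow]
  simp

end alg

section ip
variable {N : ℕ}

attribute [local instance] Matrix.frobeniusNormedAddCommGroup Matrix.frobeniusNormedSpace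
  Matrix.frobeniusNormedRing Matrix.frobeniusNormedAlgebra

/-- normalized squared norm -/
noncomputable def nsq (A : SMat N) : ℝ := (mInner N A A).re

theorem mInner_zero_right (A : SMat N) : mInner N A 0 = 0 := by simp [mInner]
theorem mInner_zero_left (A : SMat N) : mInner N 0 A = 0 := by simp [mInner]
theorem mInner_add_right (A B C : SMat N) : mInner N A (B + C) = mInner N A B + mInner N A C := by
  simp [mInner, mul_add]
theorem mInner_sub_right (A B C : SMat N) : mInner N A (B - C) = mInner N A B - mInner N A C := by
  simp [mInner, mul_sub]
theorem mInner_add_left (A B C : SMat N) : mInner N (A + B) C = mInner N A C + mInner N B C := by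
  simp [mInner, mul_add, add_mul]
theorem mInner_sub_left (A B C : SMat N) : mInner N (A - B) C = mInner N A C - mInner N B C := by
  simp [mInner, mul_sub, sub_mul]
theorem mInner_smul_right (c : ℂ) (A B : SMat N) : mInner N A (c • B) = c * mInner N A B := by
  simp [mInner, mul_left_comm]
theorem mInner_smul_left (c : ℂ) (A B : SMat N) : mInner N (c • A) B = star c * mInner N A B := by
  simp [mInner, mul_left_comm]
theorem mInner_sum_right {ι : Type*} (s : Finset ι) (A : SMat N) (f : ι → SMat N) :
    mInner N A (∑ i ∈ s, f i) = ∑ i ∈ s, mInner N A (f i) := by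
  simp [mInner, Finset.mul_sum, trace_sum]
theorem mInner_sum_left {ι : Type*} (s : Finset ι) (A : SMat N) (f : ι → SMat N) :
    mInner N (∑ i ∈ s, f i) A = ∑ i ∈ s, mInner N (f i) A := by
  simp [mInner, Finset.mul_sum, Finset.sum_mul, trace_sum, conjTranspose_sum]

theorem mInner_star (A B : SMat N) : star (mInner N A B) = mInner N B A := by
  unfold mInner
  rw [star_mul', ← trace_conjTranspose]
  simp

theorem mInner_re_comm (A B : SMat N) : (mInner N A B).re = (mInner N B A).re := by
  rw [← mInner_star B A]; simp

theorem nsq_eq_norm (A : SMat N) : nsq A = ‖A‖ ^ 2 / 2 ^ (N / 2) := by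
  have h1 : ‖A‖ ^ 2 = ∑ i, ∑ j, ‖A i j‖ ^ 2 := by
    rw [frobenius_norm_def, ← Real.sqrt_eq_rpow]
    rw [Real.sq_sqrt (by positivity)]
    simp
  have h2 : (Aᴴ * A).trace = ((∑ i, ∑ j, ‖A i j‖ ^ 2 : ℝ) : ℂ) := by
    rw [Finset.sum_comm]
    simp only [trace, diag_apply, mul_apply, conjTranspose_apply]
    push_cast
    refine Finset.sum_congr rfl fun j _ => Finset.sum_congr rfl fun i _ => ?_
    rw [← Complex.conj_mul']
    rfl
  unfold nsq mInner
  rw [h2, ← h1]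
  have : ((2 : ℂ) ^ (N / 2))⁻¹ * ((‖A‖ ^ 2 : ℝ) : ℂ) = (((2 : ℝ) ^ (N / 2))⁻¹ * ‖A‖ ^ 2 : ℝ) := by
    push_cast; ring
  rw [this, Complex.ofReal_re]
  ring

theorem nsq_nonneg (A : SMat N) : 0 ≤ nsq A := by
  rw [nsq_eq_norm]; positivity

theorem nsq_eq_zero {A : SMat N} (h : nsq A = 0) : A = 0 := by
  rw [nsq_eq_norm] at h
  have : ‖A‖ ^ 2 = 0 := by
    rcases div_eq_zero_iff.1 h with h | h
    · exact h
    · exact absurd h (by positivity)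
  simpa using this

theorem nsq_zero : nsq (0 : SMat N) = 0 := by simp [nsq, mInner_zero_right]

theorem norm_le_of_nsq_le {A : SMat N} {c : ℝ} (hc : 0 ≤ c) (h : nsq A ≤ c ^ 2) :
    ‖A‖ ≤ Real.sqrt (2 ^ (N / 2)) * c := by
  rw [nsq_eq_norm, div_le_iff₀ (by positivity)] at h
  refine le_of_sq_le_sq ?_ (by positivity)
  rw [mul_pow, Real.sq_sqrt (by positivity)]
  linarith

theorem nsq_le_of_norm_le {A : SMat N} {c : ℝ} 
    (h : ‖A‖ ≤ Real.sqrt (2 ^ (N / 2)) * c) : nsq A ≤ c ^ 2 := by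
  rw [nsq_eq_norm, div_le_iff₀ (by positivity)]
  calc ‖A‖ ^ 2 ≤ (Real.sqrt (2 ^ (N / 2)) * c) ^ 2 := by gcongr
    _ = _ := by rw [mul_pow, Real.sq_sqrt (by positivity)]; ring

theorem norm_le_norm_of_nsq {A B : SMat N} (h : nsq A ≤ nsq B) : ‖A‖ ≤ ‖B‖ := by
  rw [nsq_eq_norm, nsq_eq_norm, div_le_div_iff_of_pos_right (by positivity)] at h
  exact le_of_sq_le_sq h (norm_nonneg _)

theorem nsq_add (A B : SMat N) : nsq (A + B) = nsq A + 2 * (mInner N A B).re + nsq B := by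
  unfold nsq
  rw [mInner_add_left, mInner_add_right, mInner_add_right]
  simp only [Complex.add_re]
  rw [mInner_re_comm B A]; ring

theorem nsq_sub (A B : SMat N) : nsq (A - B) = nsq A - 2 * (mInner N A B).re + nsq B := by
  unfold nsq
  rw [mInner_sub_left, mInner_sub_right, mInner_sub_right]
  simp only [Complex.sub_re]
  rw [mInner_re_comm B A]; ring

theorem nsq_smul (c : ℂ) (A : SMat N) : nsq (c • A) = ‖c‖ ^ 2 * nsq A := by
  unfold nsq
  rw [mInner_smul_left, mInner_smul_right, ← mul_assoc]
  have : star c * c = ((‖c‖ ^ 2 : ℝ) : ℂ) := by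
    push_cast; exact Complex.conj_mul' c
  rw [this, Complex.re_ofReal_mul]

theorem abs_re_mInner_le {A B : SMat N} {c : ℝ} (hA : nsq A ≤ c) (hB : nsq B ≤ c) :
    |(mInner N A B).re| ≤ c := by
  have h1 := nsq_nonneg (A + B)
  have h2 := nsq_nonneg (A - B)
  rw [nsq_add] at h1
  rw [nsq_sub] at h2
  rw [abs_le]; constructor <;> linarith

theorem nsq_unitary_mul {U : SMat N} (hU : Uᴴ * U = 1) (A : SMat N) : nsq (U * A) = nsq A := by
  unfold nsq mInner
  rw [conjTranspose_mul, mul_assoc, ← mul_assoc Uᴴ, hU, one_mul]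

theorem nsq_mul_unitary {U : SMat N} (hU : U * Uᴴ = 1) (A : SMat N) : nsq (A * U) = nsq A := by
  unfold nsq mInner
  rw [conjTranspose_mul, trace_mul_comm, mul_assoc, ← mul_assoc U, hU, one_mul, trace_mul_comm]

theorem nsq_sub_le (A B : SMat N) : nsq (A - B) ≤ 2 * nsq A + 2 * nsq B := by
  have h1 := nsq_nonneg (A + B)
  rw [nsq_add] at h1
  rw [nsq_sub]; linarith

/-- Commutator with a Hermitian unitary. -/
theorem nsq_comm_le {U : SMat N} (hU : Uᴴ * U = 1) (A : SMat N) :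
    nsq (U * A - A * U) ≤ 4 * nsq A := by
  have h := nsq_sub_le (U * A) (A * U)
  rw [nsq_unitary_mul hU, nsq_mul_unitary (mul_eq_one_comm.1 hU)] at h
  linarith

theorem nsq_one : nsq (1 : SMat N) = 1 := by
  unfold nsq mInner
  simp

theorem mInner_self_re_unitary {U : SMat N} (hU : Uᴴ * U = 1) : nsq U = 1 := by
  have := nsq_unitary_mul hU 1
  rwa [mul_one, nsq_one] at this

end ip

section proj
variable {N : ℕ} {ψ : Fin N → SMat N} {Qs : ℕ → (SMat N →ₗ[ℂ] SMat N)}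

/-- The family of orthogonal projections onto the size spaces. -/
structure IsProj (ψ : Fin N → SMat N) (Qs : ℕ → (SMat N →ₗ[ℂ] SMat N)) : Prop where
  mem : ∀ s A, Qs s A ∈ sizeSpan ψ s
  orth : ∀ s A, ∀ B ∈ sizeSpan ψ s, mInner N B (A - Qs s A) = 0

theorem sizeSpan_orth (h : Maj ψ) (hN : Even N) {s s' : ℕ} (hs : s ≠ s') {A B : SMat N}
    (hA : A ∈ sizeSpan ψ s) (hB : B ∈ sizeSpan ψ s') : mInner N A B = 0 := by
  unfold sizeSpan at hA hB
  induction hA using Submodule.span_induction with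
  | zero => exact mInner_zero_left _
  | add x y _ _ hx hy => rw [mInner_add_left, hx, hy, add_zero]
  | smul c x _ hx => rw [mInner_smul_left, hx, mul_zero]
  | mem x hx =>
    obtain ⟨X, hX, rfl⟩ := hx
    induction hB using Submodule.span_induction with
    | zero => exact mInner_zero_right _
    | add x y _ _ hx hy => rw [mInner_add_right, hx, hy, add_zero]
    | smul c x _ hx => rw [mInner_smul_right, hx, mul_zero]
    | mem y hy =>
      obtain ⟨Y, hY, rfl⟩ := hy
      refine mInner_psiProd h hN ?_
      rintro rfl
      exact hs (hX.symm.trans hY)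

theorem IsProj.inner_self (hQ : IsProj ψ Qs) (s : ℕ) (A : SMat N) :
    mInner N (Qs s A) A = mInner N (Qs s A) (Qs s A) := by
  have := hQ.orth s A _ (hQ.mem s A)
  rw [mInner_sub_right, sub_eq_zero] at this
  exact this

theorem IsProj.re_eq (hQ : IsProj ψ Qs) (s : ℕ) (A : SMat N) :
    (mInner N A (Qs s A)).re = nsq (Qs s A) := by
  rw [mInner_re_comm, hQ.inner_self]; rfl

theorem IsProj.nsq_sum (hQ : IsProj ψ Qs) (h : Maj ψ) (hN : Even N) (I : Finset ℕ) (A : SMat N) :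
    nsq (∑ s ∈ I, Qs s A) = ∑ s ∈ I, nsq (Qs s A) := by
  unfold nsq
  rw [mInner_sum_left, Complex.re_sum]
  refine Finset.sum_congr rfl fun s hs => ?_
  rw [mInner_sum_right, Finset.sum_eq_single s]
  · intro s' _ hne
    exact sizeSpan_orth h hN hne.symm (hQ.mem _ _) (hQ.mem _ _)
  · exact fun hn => absurd hs hn

theorem IsProj.nsq_sum_le (hQ : IsProj ψ Qs) (h : Maj ψ) (hN : Even N) (I : Finset ℕ)
    (A : SMat N) : nsq (∑ s ∈ I, Qs s A) ≤ nsq A := by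
  have h1 := nsq_nonneg (A - ∑ s ∈ I, Qs s A)
  rw [nsq_sub, hQ.nsq_sum h hN, mInner_sum_right, Complex.re_sum] at h1
  simp only [hQ.re_eq] at h1
  rw [hQ.nsq_sum h hN]
  linarith

theorem IsProj.kill (hQ : IsProj ψ Qs) (h : Maj ψ) (hN : Even N) {s s' : ℕ} (hs : s ≠ s')
    {A : SMat N} (hA : A ∈ sizeSpan ψ s') : Qs s A = 0 := by
  apply nsq_eq_zero
  have h1 := hQ.inner_self s A
  rw [sizeSpan_orth h hN hs (hQ.mem _ _) hA] at h1
  unfold nsq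
  rw [← h1]; rfl

/-- operators of size at most `m` -/
noncomputable def lowSpan (ψ : Fin N → SMat N) (m : ℕ) : Submodule ℂ (SMat N) :=
  Submodule.span ℂ {M | ∃ Y : Finset (Fin N), Y.card ≤ m ∧ M = psiProd ψ Y}

theorem IsProj.kill_low (hQ : IsProj ψ Qs) (h : Maj ψ) (hN : Even N) {s m : ℕ} (hs : m < s)
    {A : SMat N} (hA : A ∈ lowSpan ψ m) : Qs s A = 0 := by
  unfold lowSpan at hA
  induction hA using Submodule.span_induction with
  | zero => exact map_zero _
  | add x y _ _ hx hy => rw [map_add, hx, hy, add_zero]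
  | smul c x _ hx => rw [map_smul, hx, smul_zero]
  | mem x hx =>
    obtain ⟨X, hX, rfl⟩ := hx
    refine hQ.kill h hN (s' := X.card) (by omega) ?_
    exact Submodule.subset_span ⟨X, rfl, rfl⟩

theorem lowSpan_mono {m m' : ℕ} (hm : m ≤ m') : lowSpan ψ m ≤ lowSpan ψ m' := by
  apply Submodule.span_mono
  rintro _ ⟨Y, hY, rfl⟩
  exact ⟨Y, hY.trans hm, rfl⟩

theorem lowSpan_mul_left (h : Maj ψ) {m : ℕ} (X : Finset (Fin N)) {A : SMat N}
    (hA : A ∈ lowSpan ψ m) : psiProd ψ X * A ∈ lowSpan ψ (m + X.card) := by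
  unfold lowSpan at hA
  induction hA using Submodule.span_induction with
  | zero => simp
  | add x y _ _ hx hy => rw [mul_add]; exact add_mem hx hy
  | smul c x _ hx => rw [mul_smul_comm]; exact Submodule.smul_mem _ _ hx
  | mem x hx =>
    obtain ⟨Y, hY, rfl⟩ := hx
    obtain ⟨c, hc⟩ := psiProd_mul h X Y
    rw [hc]
    refine Submodule.smul_mem _ _ (Submodule.subset_span ⟨_, ?_, rfl⟩)
    have : symmDiff X Y ⊆ X ∪ Y := by
      intro x; simp only [Finset.mem_symmDiff, Finset.mem_union]; tauto
    have := (Finset.card_le_card this).trans (Finset.card_union_le _ _)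
    omega

theorem lowSpan_mul_right (h : Maj ψ) {m : ℕ} (X : Finset (Fin N)) {A : SMat N}
    (hA : A ∈ lowSpan ψ m) : A * psiProd ψ X ∈ lowSpan ψ (m + X.card) := by
  unfold lowSpan at hA
  induction hA using Submodule.span_induction with
  | zero => simp
  | add x y _ _ hx hy => rw [add_mul]; exact add_mem hx hy
  | smul c x _ hx => rw [smul_mul_assoc]; exact Submodule.smul_mem _ _ hx
  | mem x hx =>
    obtain ⟨Y, hY, rfl⟩ := hx
    obtain ⟨c, hc⟩ := psiProd_mul h Y X
    rw [hc]
    refine Submodule.smul_mem _ _ (Submodule.subset_span ⟨_, ?_, rfl⟩)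
    have : symmDiff Y X ⊆ X ∪ Y := by
      intro x; simp only [Finset.mem_symmDiff, Finset.mem_union]; tauto
    have := (Finset.card_le_card this).trans (Finset.card_union_le _ _)
    omega

end proj

set_option linter.unusedSectionVars false

section lists
variable {F : Type*} [Fintype F] [DecidableEq F]

/-- all lists of a given length -/
def lists (F : Type*) [Fintype F] [DecidableEq F] : ℕ → Finset (List F)
  | 0 => {[]}
  | m + 1 => ((Finset.univ : Finset F) ×ˢ lists F m).image (fun p => p.1 :: p.2)

theorem sum_lists_succ {V : Type*} [AddCommMonoid V] (m : ℕ) (f : List F → V) :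
    ∑ l ∈ lists F (m + 1), f l = ∑ X : F, ∑ l ∈ lists F m, f (X :: l) := by
  rw [lists, Finset.sum_image, Finset.sum_product]
  rintro ⟨a, b⟩ _ ⟨c, d⟩ _ h
  simp only [List.cons.injEq] at h
  exact Prod.ext h.1 h.2

theorem sum_lists_zero {V : Type*} [AddCommMonoid V] (f : List F → V) :
    ∑ l ∈ lists F 0, f l = f [] := by
  simp [lists]

theorem sum_lists_add {V : Type*} [AddCommMonoid V] (a b : ℕ) (f : List F → V) :
    ∑ l ∈ lists F (a + b), f l = ∑ l ∈ lists F a, ∑ l' ∈ lists F b, f (l ++ l') := by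
  induction a generalizing f with
  | zero => rw [sum_lists_zero]; simp
  | succ a ih =>
    rw [Nat.succ_add, sum_lists_succ, sum_lists_succ]
    refine Finset.sum_congr rfl fun X _ => ?_
    rw [ih]; simp

theorem length_of_mem_lists {m : ℕ} {l : List F} (h : l ∈ lists F m) : l.length = m := by
  induction m generalizing l with
  | zero => simp [lists] at h; simp [h]
  | succ m ih =>
    simp only [lists, Finset.mem_image, Finset.mem_product] at h
    obtain ⟨⟨X, l'⟩, ⟨_, h⟩, rfl⟩ := h
    simp [ih h]

/-- sign of an edge -/
def sgn (ε : F → Bool) (X : F) : ℝ := if ε X then 1 else -1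

/-- product of signs -/
def chi (ε : F → Bool) (l : List F) : ℝ := (l.map (sgn ε)).prod

theorem chi_cons (ε : F → Bool) (X : F) (l : List F) : chi ε (X :: l) = sgn ε X * chi ε l := by
  simp [chi]

theorem chi_append (ε : F → Bool) (l l' : List F) : chi ε (l ++ l') = chi ε l * chi ε l' := by
  simp [chi]

theorem abs_chi (ε : F → Bool) (l : List F) : |chi ε l| = 1 := by
  induction l with
  | nil => simp [chi]
  | cons X l ih => rw [chi_cons, abs_mul, ih, sgn]; split_ifs <;> simp

/-- bflip one sign -/
def bflip (X : F) (ε : F → Bool) : F → Bool := Function.update ε X (!ε X)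

theorem bflip_bflip (X : F) (ε : F → Bool) : bflip X (bflip X ε) = ε := by
  ext Y
  by_cases h : Y = X
  · subst h; simp [bflip]
  · simp [bflip, h]

theorem chi_flip (X : F) (ε : F → Bool) (l : List F) :
    chi (bflip X ε) l = (-1) ^ (l.count X) * chi ε l := by
  induction l with
  | nil => simp [chi]
  | cons Y l ih =>
    rw [chi_cons, chi_cons, ih, List.count_cons]
    by_cases h : Y = X
    · subst h
      have : sgn (bflip Y ε) Y = - sgn ε Y := by
        simp only [sgn, bflip, Function.update_self]; cases ε Y <;> simp
      rw [this, if_pos (by simp), pow_succ]; ring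
    · have : sgn (bflip X ε) Y = sgn ε Y := by
        simp [sgn, bflip, h]
      rw [this]; simp [h]; ring

theorem sum_chi_eq_zero {X : F} {l : List F} (h : l.count X = 1) :
    ∑ ε : F → Bool, chi ε l = 0 := by
  have h1 : ∑ ε : F → Bool, chi ε l = ∑ ε : F → Bool, chi (bflip X ε) l :=
    (Equiv.sum_comp (⟨bflip X, bflip X, bflip_bflip X, bflip_bflip X⟩ : (F → Bool) ≃ (F → Bool))
      (fun ε => chi ε l)).symm
  simp only [chi_flip, h, pow_one, neg_one_mul, Finset.sum_neg_distrib] at h1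
  linarith

/-- no element occurs exactly once -/
def NoSingle (l : List F) : Prop := ∀ X, l.count X ≠ 1

theorem NoSingle.card_le {l : List F} (h : NoSingle l) : 2 * l.toFinset.card ≤ l.length := by
  rw [← List.sum_toFinset_count_eq_length, mul_comm, ← smul_eq_mul]
  refine Finset.card_nsmul_le_sum _ _ _ fun X hX => ?_
  have h1 : 0 < l.count X := List.count_pos_iff.2 (List.mem_toFinset.1 hX)
  have h2 := h X
  omega

open Classical in
theorem abs_sum_chi_le (l : List F) :
    |∑ ε : F → Bool, chi ε l| ≤ if NoSingle l then (2 : ℝ) ^ (Fintype.card F) else 0 := by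
  split_ifs with h
  · refine (Finset.abs_sum_le_sum_abs _ _).trans ?_
    simp only [abs_chi]
    simp
  · unfold NoSingle at h
    push Not at h
    obtain ⟨X, hX⟩ := h
    rw [sum_chi_eq_zero hX]; simp

end lists

section conn
variable {N q : ℕ}

/-- the set of hyperedges -/
abbrev Edge (N q : ℕ) := {X : Finset (Fin N) // X.card = q}

/-- the vertices touched by a list of edges, together with the initial one -/
def supp (v : Fin N) : List (Edge N q) → Finset (Fin N)
  | [] => {v}
  | X :: l => X.1 ∪ supp v l

/-- each edge of the list (latest first) meets the vertices touched before -/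
def Conn (v : Fin N) : List (Edge N q) → Prop
  | [] => True
  | X :: l => Conn v l ∧ ¬ Disjoint X.1 (supp v l)

theorem supp_card (v : Fin N) (l : List (Edge N q)) : (supp v l).card ≤ 1 + q * l.length := by
  induction l with
  | nil => simp [supp]
  | cons X l ih =>
    have := Finset.card_union_le X.1 (supp v l)
    have h2 := X.2
    simp only [supp, List.length_cons]
    rw [mul_add]
    omega

theorem supp_append (v : Fin N) (l l' : List (Edge N q)) : supp v l ⊆ supp v (l ++ l') := by
  induction l with
  | nil =>
    simp only [List.nil_append, supp]
    induction l' with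
    | nil => simp [supp]
    | cons X l ih => exact ih.trans Finset.subset_union_right
  | cons X l ih => exact Finset.union_subset_union_right ih

theorem conn_append {v : Fin N} {l l' : List (Edge N q)} (h : Conn v l) (h' : Conn v l') :
    Conn v (l ++ l') := by
  induction l with
  | nil => exact h'
  | cons X l ih =>
    exact ⟨ih h.1, fun hd => h.2 (Finset.disjoint_of_subset_right (supp_append v l l') hd)⟩

theorem card_edges_mem (v : Fin N) :
    ((Finset.univ : Finset (Edge N q)).filter (fun X => v ∈ X.1)).card ≤
      (N - 1).choose (q - 1) := by
  have : (Finset.powersetCard (q - 1) (Finset.univ.erase v)).card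
      = (N - 1).choose (q - 1) := by
    rw [Finset.card_powersetCard, Finset.card_erase_of_mem (Finset.mem_univ _), Finset.card_univ,
      Fintype.card_fin]
  rw [← this]
  refine Finset.card_le_card_of_injOn (fun X => X.1.erase v) ?_ ?_
  · intro X hX
    simp only [Finset.mem_coe, Finset.mem_filter, Finset.mem_univ, true_and] at hX
    simp only [Finset.mem_coe, Finset.mem_powersetCard]
    refine ⟨Finset.erase_subset_erase _ (Finset.subset_univ _), ?_⟩
    rw [Finset.card_erase_of_mem hX, X.2]
  · intro X hX Y hY hXY
    simp only [Finset.mem_coe, Finset.mem_filter, Finset.mem_univ, true_and] at hX hY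
    apply Subtype.ext
    rw [← Finset.insert_erase hX, ← Finset.insert_erase hY]
    exact congrArg _ hXY

theorem card_edges_meet (U : Finset (Fin N)) :
    ((Finset.univ : Finset (Edge N q)).filter (fun X => ¬ Disjoint X.1 U)).card ≤
      U.card * (N - 1).choose (q - 1) := by
  have : (Finset.univ : Finset (Edge N q)).filter (fun X => ¬ Disjoint X.1 U) ⊆
      U.biUnion (fun v => (Finset.univ : Finset (Edge N q)).filter (fun X => v ∈ X.1)) := by
    intro X hX
    simp only [Finset.mem_filter, Finset.mem_univ, true_and, Finset.not_disjoint_iff] at hX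
    obtain ⟨v, h1, h2⟩ := hX
    simp only [Finset.mem_biUnion, Finset.mem_filter, Finset.mem_univ, true_and]
    exact ⟨v, h2, h1⟩
  refine (Finset.card_le_card this).trans ?_
  exact Finset.card_biUnion_le_card_mul _ _ _ fun v _ => card_edges_mem v

open Classical in
/-- weighted count of connected lists -/
noncomputable def Wsum (v : Fin N) (q : ℕ) (z : ℝ) (m : ℕ) : ℝ :=
  ∑ l ∈ lists (Edge N q) m, if Conn v l then z ^ l.toFinset.card else 0

theorem Wsum_succ_le (v : Fin N) {z : ℝ} (hz : 0 ≤ z) (hq : 0 < q)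
    (hzB : z * (q * ((N - 1).choose (q - 1) : ℕ)) ≤ 1) (m : ℕ) :
    Wsum v q z (m + 1) ≤ Wsum v q z m * (2 * (m + 1)) := by
  classical
  unfold Wsum
  rw [sum_lists_succ, Finset.sum_comm, Finset.sum_mul]
  refine Finset.sum_le_sum fun l hl => ?_
  have hlen := length_of_mem_lists hl
  by_cases hc : Conn v l
  swap
  · simp [Conn, hc]
  rw [if_pos hc]
  set d := l.toFinset.card with hd
  set B : ℕ := (N - 1).choose (q - 1) with hB
  have hterm : ∀ X : Edge N q, (if Conn v (X :: l) then z ^ (X :: l).toFinset.card else 0) ≤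
      (if X ∈ l.toFinset then z ^ d else 0) +
      (if ¬ Disjoint X.1 (supp v l) then z ^ (d + 1) else 0) := by
    intro X
    have p1 : 0 ≤ (if X ∈ l.toFinset then z ^ d else 0) := by split_ifs <;> positivity
    have p2 : 0 ≤ (if ¬ Disjoint X.1 (supp v l) then z ^ (d + 1) else 0) := by
      split_ifs <;> positivity
    by_cases hX : Conn v (X :: l)
    · rw [if_pos hX]
      by_cases hm : X ∈ l.toFinset
      · rw [List.toFinset_cons, Finset.insert_eq_of_mem hm, if_pos hm]
        linarith
      · rw [List.toFinset_cons, Finset.card_insert_of_notMem hm, if_pos hX.2]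
        linarith
    · rw [if_neg hX]; linarith
  refine (Finset.sum_le_sum fun X _ => hterm X).trans ?_
  rw [Finset.sum_add_distrib, ← Finset.sum_filter, ← Finset.sum_filter, Finset.sum_const,
    Finset.sum_const, nsmul_eq_mul, nsmul_eq_mul]
  have c1 : (((Finset.univ : Finset (Edge N q)).filter (fun X => X ∈ l.toFinset)).card : ℝ) ≤ m := by
    have : (Finset.univ : Finset (Edge N q)).filter (fun X => X ∈ l.toFinset) = l.toFinset := by
      ext X; simp
    rw [this]
    exact_mod_cast (List.toFinset_card_le l).trans hlen.le
  have c2 : (((Finset.univ : Finset (Edge N q)).filter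
      (fun X => ¬ Disjoint X.1 (supp v l))).card : ℝ) ≤ (m + 1) * (q * B) := by
    have h1 := card_edges_meet (q := q) (supp v l)
    have h2 := supp_card v l
    rw [hlen] at h2
    have h3 : (supp v l).card ≤ (m + 1) * q := by nlinarith
    have := h1.trans (Nat.mul_le_mul_right _ h3)
    rw [mul_assoc] at this
    exact_mod_cast this
  have e : z ^ (d + 1) = z ^ d * z := pow_succ _ _
  have hzd : 0 ≤ z ^ d := by positivity
  calc _ ≤ (m : ℝ) * z ^ d + ((m + 1) * (q * B)) * (z ^ d * z) := by
        rw [e]; gcongr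
    _ = z ^ d * (m + (m + 1) * (z * (q * B))) := by ring
    _ ≤ z ^ d * (m + (m + 1) * 1) := by gcongr
    _ ≤ z ^ d * (2 * (m + 1)) := by
        refine mul_le_mul_of_nonneg_left ?_ hzd
        linarith

theorem Wsum_le (v : Fin N) {z : ℝ} (hz : 0 ≤ z) (hq : 0 < q)
    (hzB : z * (q * ((N - 1).choose (q - 1) : ℕ)) ≤ 1) (m : ℕ) :
    Wsum v q z m ≤ 2 ^ m * (m.factorial : ℝ) := by
  induction m with
  | zero => simp [Wsum, sum_lists_zero, Conn]
  | succ m ih =>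
    refine (Wsum_succ_le v hz hq hzB m).trans ?_
    rw [Nat.factorial_succ, pow_succ]
    push_cast
    have : (0 : ℝ) ≤ 2 * (m + 1) := by positivity
    nlinarith [mul_le_mul_of_nonneg_right ih this]

open Classical in
theorem count_le (v : Fin N) (hq : 0 < q) (hqN : q ≤ N) (k : ℕ) :
    (∑ l ∈ lists (Edge N q) (k + k), if Conn v l ∧ NoSingle l then (1 : ℝ) else 0) ≤
      (q * ((N - 1).choose (q - 1) : ℕ)) ^ k * (16 ^ k * (k.factorial : ℝ) ^ 2) := by
  set B : ℕ := (N - 1).choose (q - 1) with hB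
  have hB0 : 0 < B := Nat.choose_pos (by omega)
  have hqB : (1 : ℝ) ≤ q * B := by exact_mod_cast Nat.mul_pos hq hB0
  set z : ℝ := (q * B : ℝ)⁻¹ with hz
  have hz0 : 0 ≤ z := by positivity
  have h1 := Wsum_le (q := q) v hz0 hq (by rw [hz]; exact (inv_mul_cancel₀ (by positivity)).le) (k + k)
  have h2 : (∑ l ∈ lists (Edge N q) (k + k), if Conn v l ∧ NoSingle l then (1 : ℝ) else 0) ≤
      (q * B : ℝ) ^ k * Wsum v q z (k + k) := by
    unfold Wsum
    rw [Finset.mul_sum]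
    refine Finset.sum_le_sum fun l hl => ?_
    by_cases hc : Conn v l ∧ NoSingle l
    · rw [if_pos hc, if_pos hc.1]
      have hd := hc.2.card_le
      rw [length_of_mem_lists hl] at hd
      have hd' : l.toFinset.card ≤ k := by omega
      rw [hz, inv_pow, ← div_eq_mul_inv, le_div_iff₀ (by positivity), one_mul]
      exact pow_le_pow_right₀ hqB hd'
    · rw [if_neg hc]
      split_ifs <;> positivity
  have h3 : (((k + k).factorial : ℕ) : ℝ) ≤ 4 ^ k * (k.factorial : ℝ) ^ 2 := by
    have h4 : (k + k).factorial ≤ 4 ^ k * k.factorial ^ 2 := by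
      have := Nat.add_choose_mul_factorial_mul_factorial k k
      rw [← this, mul_assoc, ← sq]
      refine Nat.mul_le_mul_right _ ?_
      calc (k + k).choose k ≤ 2 ^ (k + k) := Nat.choose_le_two_pow _ _
        _ = 4 ^ k := by rw [← two_mul, pow_mul]; norm_num
    exact_mod_cast h4
  refine h2.trans (mul_le_mul_of_nonneg_left (h1.trans ?_) (by positivity))
  calc (2 : ℝ) ^ (k + k) * ((k + k).factorial : ℕ) ≤ 2 ^ (k + k) * (4 ^ k * (k.factorial : ℝ) ^ 2) := by
        gcongr
    _ = _ := by
        rw [← two_mul, pow_mul, ← mul_assoc, ← mul_pow]; norm_num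

end conn

section moment
variable {N q : ℕ} {ψ : Fin N → SMat N}

/-- iterated commutators with `H` -/
def adk (H A : SMat N) : ℕ → SMat N
  | 0 => A
  | k + 1 => H * adk H A k - adk H A k * H

/-- nested commutators along a list of edges -/
noncomputable def nest (ψ : Fin N → SMat N) (q : ℕ) (v : Fin N) : List (Edge N q) → SMat N
  | [] => ψ v
  | X :: l => hX ψ q X.1 * nest ψ q v l - nest ψ q v l * hX ψ q X.1

theorem sykH_eq (ε : Edge N q → Bool) :
    sykH q ψ ε = ∑ X : Edge N q, ((sykSigma N q * sgn ε X : ℝ) : ℂ) • hX ψ q X.1 := by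
  unfold sykH hX
  rw [Finset.smul_sum]
  refine Finset.sum_congr rfl fun X _ => ?_
  rw [smul_comm]
  congr 2
  unfold sgn
  split_ifs <;> simp

theorem adk_eq (ε : Edge N q → Bool) (v : Fin N) (k : ℕ) :
    adk (sykH q ψ ε) (ψ v) k =
      ∑ l ∈ lists (Edge N q) k, ((sykSigma N q ^ k * chi ε l : ℝ) : ℂ) • nest ψ q v l := by
  induction k with
  | zero => rw [sum_lists_zero]; simp [adk, chi, nest]
  | succ k ih =>
    rw [sum_lists_succ, adk, ih, sykH_eq, Finset.sum_mul, Finset.mul_sum, ← Finset.sum_sub_distrib]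
    refine Finset.sum_congr rfl fun X _ => ?_
    rw [Finset.sum_mul, Finset.mul_sum, ← Finset.sum_sub_distrib]
    refine Finset.sum_congr rfl fun l _ => ?_
    rw [smul_mul_smul_comm, smul_mul_smul_comm, nest, chi_cons, smul_sub]
    congr 2 <;> (push_cast; ring)

theorem hX_commute (h : Maj ψ) (hq : Even q) {X Y : Edge N q} (hXY : Disjoint X.1 Y.1) :
    Commute (hX ψ q X.1) (hX ψ q Y.1) := by
  unfold hX
  refine Commute.smul_left (Commute.smul_right ?_ _) _
  exact psiProd_commute h (by rw [X.2]; exact hq) hXY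

theorem nest_commute (h : Maj ψ) (hq : Even q) (v : Fin N) (X : Edge N q) (l : List (Edge N q))
    (hd : Disjoint X.1 (supp v l)) : Commute (hX ψ q X.1) (nest ψ q v l) := by
  induction l with
  | nil =>
    unfold hX nest
    refine Commute.smul_left ?_ _
    refine psiProd_commute_psi h (by rw [X.2]; exact hq) ?_
    simpa [supp] using hd
  | cons Y l ih =>
    simp only [supp, Finset.disjoint_union_right] at hd
    have h1 := hX_commute h hq hd.1
    have h2 := ih hd.2
    rw [nest]
    exact (h1.mul_right h2).sub_right (h2.mul_right h1)

theorem nest_eq_zero (h : Maj ψ) (hq : Even q) (v : Fin N) (l : List (Edge N q))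
    (hc : ¬ Conn v l) : nest ψ q v l = 0 := by
  induction l with
  | nil => exact absurd trivial hc
  | cons X l ih =>
    rw [nest]
    by_cases hl : Conn v l
    · have : Disjoint X.1 (supp v l) := by
        by_contra hd
        exact hc ⟨hl, hd⟩
      rw [(nest_commute h hq v X l this).eq, sub_self]
    · rw [ih hl]; simp

theorem psi_unitary (h : Maj ψ) (v : Fin N) : (ψ v)ᴴ * ψ v = 1 := by
  rw [(h.herm v).eq, h.sq]

theorem nsq_nest (h : Maj ψ) (v : Fin N) (l : List (Edge N q)) :
    nsq (nest ψ q v l) ≤ 4 ^ l.length := by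
  induction l with
  | nil => simp [nest, mInner_self_re_unitary (psi_unitary h v)]
  | cons X l ih =>
    rw [nest, List.length_cons, pow_succ]
    have := nsq_comm_le (hX_unitary h (q := q) X.1) (nest ψ q v l)
    linarith

open Classical in
theorem abs_mInner_nest (h : Maj ψ) (hq : Even q) (v : Fin N) (k : ℕ) (l l' : List (Edge N q))
    (hl : l.length = k) (hl' : l'.length = k) :
    |(mInner N (nest ψ q v l) (nest ψ q v l')).re| ≤ if Conn v (l ++ l') then 4 ^ k else 0 := by
  have p : (0 : ℝ) ≤ if Conn v (l ++ l') then 4 ^ k else 0 := by split_ifs <;> positivity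
  by_cases h1 : Conn v l
  · by_cases h2 : Conn v l'
    · rw [if_pos (conn_append h1 h2)]
      exact abs_re_mInner_le (hl ▸ nsq_nest h v l) (hl' ▸ nsq_nest h v l')
    · rw [nest_eq_zero h hq v l' h2, mInner_zero_right]
      simpa using p
  · rw [nest_eq_zero h hq v l h1, mInner_zero_left]
    simpa using p

theorem sykSigma_sq (hq : 0 < q) (hqN : q ≤ N) :
    sykSigma N q ^ 2 * (q * ((N - 1).choose (q - 1) : ℕ)) = 1 / 2 := by
  have hB0 : 0 < (N - 1).choose (q - 1) := Nat.choose_pos (by omega)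
  unfold sykSigma
  rw [inv_pow, Real.sq_sqrt (by positivity)]
  have : (q : ℝ) ≠ 0 := by positivity
  have : (((N - 1).choose (q - 1) : ℕ) : ℝ) ≠ 0 := by positivity
  field_simp

theorem moment_le (h : Maj ψ) (hq : Even q) (hq0 : 0 < q) (hqN : q ≤ N) (v : Fin N) (k : ℕ) :
    ∑ ε : Edge N q → Bool, nsq (adk (sykH q ψ ε) (ψ v) k) ≤
      2 ^ (Fintype.card (Edge N q)) * (32 ^ k * (k.factorial : ℝ) ^ 2) := by
  classical
  set σ := sykSigma N q with hσ
  set Fc : ℝ := 2 ^ (Fintype.card (Edge N q)) with hFc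
  have e1 : ∀ ε : Edge N q → Bool, nsq (adk (sykH q ψ ε) (ψ v) k) =
      ∑ l ∈ lists (Edge N q) k, ∑ l' ∈ lists (Edge N q) k,
        σ ^ (2 * k) * (chi ε (l ++ l') * (mInner N (nest ψ q v l) (nest ψ q v l')).re) := by
    intro ε
    unfold nsq
    rw [adk_eq, mInner_sum_left, Complex.re_sum]
    refine Finset.sum_congr rfl fun l _ => ?_
    rw [mInner_sum_right, Complex.re_sum]
    refine Finset.sum_congr rfl fun l' _ => ?_
    rw [mInner_smul_left, mInner_smul_right, ← mul_assoc]
    have : star (((σ ^ k * chi ε l : ℝ)) : ℂ) * ((σ ^ k * chi ε l' : ℝ) : ℂ) =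
        ((σ ^ (2 * k) * chi ε (l ++ l') : ℝ) : ℂ) := by
      rw [chi_append]
      have : star (((σ ^ k * chi ε l : ℝ)) : ℂ) = ((σ ^ k * chi ε l : ℝ) : ℂ) :=
        Complex.conj_ofReal _
      rw [this]
      push_cast; ring
    rw [this, Complex.re_ofReal_mul]; ring
  simp only [e1]
  rw [Finset.sum_comm]
  have e2 : ∀ l ∈ lists (Edge N q) k, ∀ l' ∈ lists (Edge N q) k,
      ∑ ε : Edge N q → Bool,
        σ ^ (2 * k) * (chi ε (l ++ l') * (mInner N (nest ψ q v l) (nest ψ q v l')).re) ≤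
      (σ ^ (2 * k) * 4 ^ k * Fc) * (if Conn v (l ++ l') ∧ NoSingle (l ++ l') then (1 : ℝ) else 0) := by
    intro l hl l' hl'
    rw [← Finset.mul_sum, ← Finset.sum_mul, mul_assoc, mul_assoc]
    refine mul_le_mul_of_nonneg_left ?_ (by rw [pow_mul]; positivity)
    refine (le_abs_self _).trans ?_
    rw [abs_mul]
    have a1 := abs_sum_chi_le (l ++ l')
    have a2 := abs_mInner_nest h hq v k l l' (length_of_mem_lists hl) (length_of_mem_lists hl')
    refine (mul_le_mul a1 a2 (abs_nonneg _) (by split_ifs <;> positivity)).trans ?_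
    by_cases c1 : Conn v (l ++ l') <;> by_cases c2 : NoSingle (l ++ l')
    · rw [if_pos c1, if_pos c2, if_pos ⟨c1, c2⟩, mul_one, mul_comm]
    all_goals simp [c1, c2]
  calc _ ≤ ∑ l ∈ lists (Edge N q) k, ∑ l' ∈ lists (Edge N q) k,
        (σ ^ (2 * k) * 4 ^ k * Fc) *
          (if Conn v (l ++ l') ∧ NoSingle (l ++ l') then (1 : ℝ) else 0) := by
        refine Finset.sum_le_sum fun l hl => ?_
        rw [Finset.sum_comm]
        exact Finset.sum_le_sum fun l' hl' => e2 l hl l' hl'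
    _ = (σ ^ (2 * k) * 4 ^ k * Fc) * ∑ l ∈ lists (Edge N q) (k + k),
          (if Conn v l ∧ NoSingle l then (1 : ℝ) else 0) := by
        rw [sum_lists_add, Finset.mul_sum]
        simp only [Finset.mul_sum]
    _ ≤ (σ ^ (2 * k) * 4 ^ k * Fc) *
        ((q * ((N - 1).choose (q - 1) : ℕ)) ^ k * (16 ^ k * (k.factorial : ℝ) ^ 2)) := by
        refine mul_le_mul_of_nonneg_left (count_le v hq0 hqN k) ?_
        rw [pow_mul]; positivity
    _ = Fc * ((σ ^ 2 * (q * ((N - 1).choose (q - 1) : ℕ))) ^ k * (4 ^ k * 16 ^ k)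
          * (k.factorial : ℝ) ^ 2) := by
        rw [mul_pow (σ ^ 2), ← pow_mul]; ring
    _ = _ := by
        rw [sykSigma_sq hq0 hqN, ← mul_pow, ← mul_pow]; norm_num

end moment

section taylor
variable {E : Type*} [NormedAddCommGroup E] [NormedSpace ℝ E]

theorem hasDerivAt_pow_div_fact (i : ℕ) (h : ℝ) :
    HasDerivAt (fun h : ℝ => h ^ (i + 1) / ((i + 1).factorial : ℝ)) (h ^ i / (i.factorial : ℝ)) h := by
  have h1 := (hasDerivAt_pow (i + 1) h).div_const ((i + 1).factorial : ℝ)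
  refine h1.congr_deriv ?_
  rw [Nat.factorial_succ]
  have : (i.factorial : ℝ) ≠ 0 := by positivity
  push_cast
  have : (i : ℝ) + 1 ≠ 0 := by positivity
  field_simp

theorem taylor_step (u : ℕ → ℝ → E) (hd : ∀ k t, HasDerivAt (u k) (u (k + 1) t) t)
    (n : ℕ) (C t0 : ℝ) (hC : ∀ t, ‖u n t‖ ≤ C) (e : ℕ → ℝ) (he : ∀ k < n, ‖u k t0‖ ≤ e k) :
    ∀ j k, k + j = n → ∀ h, 0 ≤ h → ‖u k (t0 + h)‖ ≤
      ∑ i ∈ Finset.range j, e (k + i) * (h ^ i / (i.factorial : ℝ)) +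
        C * (h ^ j / (j.factorial : ℝ)) := by
  intro j
  induction j with
  | zero =>
    intro k hk h _
    have : k = n := by omega
    subst this
    simpa using hC _
  | succ j ih =>
    intro k hk h hh
    have ih' := ih (k + 1) (by omega)
    have hder : ∀ x, HasDerivAt (fun x => u k (t0 + x)) (u (k + 1) (t0 + x)) x := by
      intro x
      exact (hd k (t0 + x)).comp_const_add t0 x
    have hB : ∀ x : ℝ, HasDerivAt (fun x : ℝ => ∑ i ∈ Finset.range (j + 1),
        e (k + i) * (x ^ i / (i.factorial : ℝ)) + C * (x ^ (j + 1) / ((j + 1).factorial : ℝ)))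
        (∑ i ∈ Finset.range j, e (k + 1 + i) * (x ^ i / (i.factorial : ℝ)) +
        C * (x ^ j / (j.factorial : ℝ))) x := by
      intro x
      refine HasDerivAt.add ?_ ((hasDerivAt_pow_div_fact j x).const_mul C)
      simp only [Finset.sum_range_succ']
      have h1 : HasDerivAt (fun x : ℝ => ∑ i ∈ Finset.range j,
          e (k + (i + 1)) * (x ^ (i + 1) / ((i + 1).factorial : ℝ)))
          (∑ i ∈ Finset.range j, e (k + 1 + i) * (x ^ i / (i.factorial : ℝ))) x := by
        refine HasDerivAt.fun_sum fun i _ => ?_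
        have := (hasDerivAt_pow_div_fact i x).const_mul (e (k + (i + 1)))
        rwa [show k + 1 + i = k + (i + 1) by ring]
      simpa using h1.add_const (e k)
    refine image_norm_le_of_norm_deriv_right_le_deriv_boundary (a := 0) (b := h)
      (f := fun x => u k (t0 + x)) (f' := fun x => u (k + 1) (t0 + x))
      (fun x _ => (hder x).continuousAt.continuousWithinAt)
      (fun x _ => (hder x).hasDerivWithinAt) ?_ hB (fun x hx => ih' x hx.1) ⟨hh, le_rfl⟩
    have := he k (by omega)
    rw [Finset.sum_range_succ']
    simpa using this

theorem fact_bound {A h : ℝ} (hA : 0 < A) (hh : 0 ≤ h) (hle : h ≤ 1 / (8 * A)) (k i : ℕ) :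
    A ^ (k + i) * ((k + i).factorial : ℝ) * (h ^ i / (i.factorial : ℝ)) ≤
      A ^ k * (k.factorial : ℝ) * (2 ^ k * (1 / 4) ^ i) := by
  have h1 : (((k + i).factorial : ℕ) : ℝ) ≤ 2 ^ (k + i) * (k.factorial : ℝ) * (i.factorial : ℝ) := by
    have h4 : (k + i).factorial ≤ 2 ^ (k + i) * k.factorial * i.factorial := by
      rw [← Nat.add_choose_mul_factorial_mul_factorial k i]
      gcongr
      exact Nat.choose_le_two_pow _ _
    exact_mod_cast h4
  have h2 : (A * h) ^ i ≤ (1 / 8) ^ i := by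
    refine pow_le_pow_left₀ (by positivity) ?_ i
    calc A * h ≤ A * (1 / (8 * A)) := by gcongr
      _ = 1 / 8 := by field_simp
  have hi : (0 : ℝ) < i.factorial := by positivity
  calc A ^ (k + i) * ((k + i).factorial : ℝ) * (h ^ i / (i.factorial : ℝ))
      ≤ A ^ (k + i) * (2 ^ (k + i) * (k.factorial : ℝ) * (i.factorial : ℝ)) *
        (h ^ i / (i.factorial : ℝ)) := by gcongr
    _ = A ^ k * (k.factorial : ℝ) * (2 ^ k * (2 ^ i * (A * h) ^ i)) := by
        rw [mul_pow, pow_add, pow_add]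
        field_simp
    _ ≤ A ^ k * (k.factorial : ℝ) * (2 ^ k * (2 ^ i * (1 / 8) ^ i)) := by gcongr
    _ = _ := by rw [← mul_pow]; norm_num

theorem chain_bound (u : ℕ → ℝ → E) (hd : ∀ k t, HasDerivAt (u k) (u (k + 1) t) t)
    {A M : ℝ} (hA : 0 < A) (hM : 0 ≤ M) : ∀ (J r : ℕ), 1 ≤ r →
    (∀ k t, k ≤ 4 ^ J * r → ‖u k t‖ ≤ M * (A ^ k * (k.factorial : ℝ))) →
    (∀ k, k < 4 ^ J * r → u k 0 = 0) →
    ∀ t : ℝ, 0 ≤ t → t ≤ J * (1 / (8 * A)) → ∀ k, k < r →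
      ‖u k t‖ ≤ M * (A ^ k * (k.factorial : ℝ)) * (1 / 2) ^ r := by
  intro J
  induction J with
  | zero =>
    intro r hr _ h0 t ht ht' k hk
    have : t = 0 := by
      simp at ht'; linarith
    rw [this, h0 k (by simpa using hk)]
    simp; positivity
  | succ J ih =>
    intro r hr hb h0 t ht ht' k hk
    have e4 : 4 ^ (J + 1) * r = 4 ^ J * (4 * r) := by ring
    rw [e4] at hb h0
    have hτ : 0 < 1 / (8 * A) := by positivity
    obtain ⟨t', h, ht'0, ht'1, hh0, hh1, rfl⟩ : ∃ t' h : ℝ, 0 ≤ t' ∧ t' ≤ J * (1 / (8 * A)) ∧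
        0 ≤ h ∧ h ≤ 1 / (8 * A) ∧ t = t' + h := by
      push_cast at ht'
      rcases le_total t (J * (1 / (8 * A))) with hc | hc
      · exact ⟨t, 0, ht, hc, le_rfl, hτ.le, by ring⟩
      · refine ⟨J * (1 / (8 * A)), t - J * (1 / (8 * A)), by positivity, le_rfl, by linarith,
          by linarith, by ring⟩
    have ih' := ih (4 * r) (by omega) hb h0 t' ht'0 ht'1
    have h4J : 1 ≤ 4 ^ J := Nat.one_le_pow _ _ (by norm_num)
    have hn : 4 * r ≤ 4 ^ J * (4 * r) := Nat.le_mul_of_pos_left _ h4J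
    obtain ⟨j, hj⟩ : ∃ j, k + j = 4 * r := ⟨4 * r - k, by omega⟩
    have hstep := taylor_step u hd (4 * r) (M * (A ^ (4 * r) * ((4 * r).factorial : ℝ))) t'
      (fun s => hb _ s hn) (fun k => M * (A ^ k * (k.factorial : ℝ)) * (1 / 2) ^ (4 * r)) ih'
      j k hj h hh0
    refine hstep.trans ?_
    set P : ℝ := A ^ k * (k.factorial : ℝ) with hP
    have hP0 : 0 ≤ P := by positivity
    have s1 : ∑ i ∈ Finset.range j, M * (A ^ (k + i) * ((k + i).factorial : ℝ)) * (1 / 2) ^ (4 * r)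
        * (h ^ i / (i.factorial : ℝ)) ≤ M * P * (2 ^ r * (1 / 2) ^ (4 * r) * 2) := by
      have hgeo : ∑ i ∈ Finset.range j, (1 / 4 : ℝ) ^ i ≤ 2 := by
        rw [geom_sum_eq (by norm_num)]
        have : (0 : ℝ) ≤ (1 / 4) ^ j := by positivity
        rw [div_le_iff_of_neg (by norm_num)]
        linarith
      calc _ ≤ ∑ i ∈ Finset.range j, M * P * (2 ^ r * (1 / 2) ^ (4 * r)) * (1 / 4) ^ i := by
            refine Finset.sum_le_sum fun i _ => ?_
            have := fact_bound hA hh0 hh1 k i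
            calc _ = M * (1 / 2) ^ (4 * r) * (A ^ (k + i) * ((k + i).factorial : ℝ) *
                  (h ^ i / (i.factorial : ℝ))) := by ring
              _ ≤ M * (1 / 2) ^ (4 * r) * (P * (2 ^ k * (1 / 4) ^ i)) := by gcongr
              _ ≤ M * (1 / 2) ^ (4 * r) * (P * (2 ^ r * (1 / 4) ^ i)) := by
                gcongr
                norm_num
              _ = _ := by ring
        _ = M * P * (2 ^ r * (1 / 2) ^ (4 * r)) * ∑ i ∈ Finset.range j, (1 / 4 : ℝ) ^ i := by
            rw [Finset.mul_sum]
        _ ≤ M * P * (2 ^ r * (1 / 2) ^ (4 * r)) * 2 := by gcongr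
        _ = _ := by ring
    have s2 : M * (A ^ (4 * r) * ((4 * r).factorial : ℝ)) * (h ^ j / (j.factorial : ℝ)) ≤
        M * P * (2 ^ r * (1 / 4) ^ (3 * r)) := by
      have := fact_bound hA hh0 hh1 k j
      rw [hj] at this
      calc _ = M * (A ^ (4 * r) * ((4 * r).factorial : ℝ) * (h ^ j / (j.factorial : ℝ))) := by ring
        _ ≤ M * (P * (2 ^ k * (1 / 4) ^ j)) := by gcongr
        _ ≤ M * (P * (2 ^ r * (1 / 4) ^ (3 * r))) := by
            have a1 : (2 : ℝ) ^ k ≤ 2 ^ r := pow_le_pow_right₀ (by norm_num) hk.le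
            have a2 : (1 / 4 : ℝ) ^ j ≤ (1 / 4) ^ (3 * r) :=
              pow_le_pow_of_le_one (by norm_num) (by norm_num) (by omega)
            gcongr
        _ = _ := by ring
    refine (add_le_add s1 s2).trans ?_
    rw [← mul_add]
    refine mul_le_mul_of_nonneg_left ?_ (by positivity)
    have e1 : (2 : ℝ) ^ r * (1 / 2) ^ (4 * r) = (1 / 2) ^ r * (1 / 4) ^ r := by
      rw [pow_mul, ← mul_pow, ← mul_pow]; norm_num
    have e2 : (2 : ℝ) ^ r * (1 / 4) ^ (3 * r) = (1 / 2) ^ r * (1 / 16) ^ r := by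
      rw [pow_mul, ← mul_pow, ← mul_pow]; norm_num
    rw [e1, e2]
    have b1 : (1 / 4 : ℝ) ^ r ≤ 1 / 4 := by
      simpa using pow_le_pow_of_le_one (by norm_num : (0:ℝ) ≤ 1 / 4) (by norm_num) hr
    have b2 : (1 / 16 : ℝ) ^ r ≤ 1 / 16 := by
      simpa using pow_le_pow_of_le_one (by norm_num : (0:ℝ) ≤ 1 / 16) (by norm_num) hr
    have b3 : (0 : ℝ) ≤ (1 / 2) ^ r := by positivity
    nlinarith

end taylor

section dyn
variable {N q : ℕ} {ψ : Fin N → SMat N}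

attribute [local instance] Matrix.frobeniusNormedAddCommGroup Matrix.frobeniusNormedSpace
  Matrix.frobeniusNormedRing Matrix.frobeniusNormedAlgebra

theorem heis_hasDerivAt (H A : SMat N) (t : ℝ) :
    HasDerivAt (heis H A) (heis H (Complex.I • (H * A - A * H)) t) t := by
  have e1 : ∀ t : ℝ, (Complex.I * t) • H = t • (Complex.I • H) := by
    intro t; rw [mul_comm, mul_smul]; rfl
  have e2 : ∀ t : ℝ, (-(Complex.I * t)) • H = t • (-(Complex.I • H)) := by
    intro t; rw [neg_smul, e1, smul_neg]
  have h1 := hasDerivAt_exp_smul_const (𝕂 := ℝ) (Complex.I • H) t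
  have h2 := hasDerivAt_exp_smul_const' (𝕂 := ℝ) (-(Complex.I • H)) t
  have h3 := (h1.mul_const A).mul h2
  unfold heis
  simp only [e1, e2]
  refine h3.congr_deriv ?_
  simp only [smul_mul_assoc, mul_smul_comm, neg_mul, mul_neg, mul_sub, sub_mul, smul_sub, mul_assoc]
  abel

theorem heis_zero (H A : SMat N) : heis H A 0 = A := by
  simp [heis]

theorem sykH_herm (h : Maj ψ) (hq : Even q) (ε : Edge N q → Bool) :
    (sykH q ψ ε)ᴴ = sykH q ψ ε := by
  rw [sykH_eq, conjTranspose_sum]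
  refine Finset.sum_congr rfl fun X _ => ?_
  rw [conjTranspose_smul, hX_herm h hq X.2]
  congr 1
  exact Complex.conj_ofReal _

theorem nsq_heis {H : SMat N} (hH : Hᴴ = H) (A : SMat N) (t : ℝ) :
    nsq (heis H A t) = nsq A := by
  have hadj : NormedSpace.exp ((-(Complex.I * t)) • H) = (NormedSpace.exp ((Complex.I * t) • H))ᴴ := by
    rw [← Matrix.exp_conjTranspose, conjTranspose_smul, hH]
    congr 2
    simp
  have hu : NormedSpace.exp ((Complex.I * t) • H) * NormedSpace.exp ((-(Complex.I * t)) • H) = 1 := by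
    rw [← Matrix.exp_add_of_commute]
    · simp
    · exact (Commute.refl H).smul_left _ |>.smul_right _
  have hu' := mul_eq_one_comm.1 hu
  unfold heis
  rw [nsq_mul_unitary, nsq_unitary_mul]
  · rw [← hadj]; exact hu'
  · rw [hadj, conjTranspose_conjTranspose, ← hadj]; exact hu'

theorem adk_low (h : Maj ψ) (ε : Edge N q → Bool) (v : Fin N) (k : ℕ) :
    adk (sykH q ψ ε) (ψ v) k ∈ lowSpan ψ (1 + k * q) := by
  induction k with
  | zero =>
    refine Submodule.subset_span ⟨{v}, by simp, (psiProd_singleton v).symm⟩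
  | succ k ih =>
    rw [adk]
    generalize adk (sykH q ψ ε) (ψ v) k = A at ih ⊢
    rw [sykH_eq, Finset.sum_mul, Finset.mul_sum]
    have e : 1 + (k + 1) * q = 1 + k * q + q := by ring
    rw [e]
    refine sub_mem (Submodule.sum_mem _ fun X _ => ?_) (Submodule.sum_mem _ fun X _ => ?_)
    · unfold hX
      rw [smul_mul_assoc, smul_mul_assoc]
      refine Submodule.smul_mem _ _ (Submodule.smul_mem _ _ ?_)
      have := lowSpan_mul_left h X.1 ih
      rwa [X.2] at this
    · unfold hX
      rw [mul_smul_comm, mul_smul_comm]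
      refine Submodule.smul_mem _ _ (Submodule.smul_mem _ _ ?_)
      have := lowSpan_mul_right h X.1 ih
      rwa [X.2] at this

theorem tail_bound {Qs : ℕ → (SMat N →ₗ[ℂ] SMat N)} (h : Maj ψ) (hN : Even N) (hq : Even q)
    (hQ : IsProj ψ Qs) (v : Fin N) (ε : Edge N q → Bool) (M : ℝ) (hM : 0 ≤ M) (J r : ℕ)
    (hr : 1 ≤ r)
    (hm : ∀ k, k ≤ 4 ^ J * r → nsq (adk (sykH q ψ ε) (ψ v) k) ≤
      M ^ 2 * (64 ^ k * (k.factorial : ℝ) ^ 2))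
    (m : ℕ) (hmr : 4 ^ J * r * q ≤ m) (I : Finset ℕ) (hI : ∀ s ∈ I, 1 + m < s)
    (t : ℝ) (ht : 0 ≤ t) (htJ : t ≤ J * (1 / 64)) :
    ∑ s ∈ I, nsq (Qs s (heis (sykH q ψ ε) (ψ v) t)) ≤ M ^ 2 * (1 / 4) ^ r := by
  set H := sykH q ψ ε with hH
  have hHh : Hᴴ = H := sykH_herm h hq ε
  let T : SMat N →ₗ[ℂ] SMat N := ∑ s ∈ I, Qs s
  have hT : ∀ A, T A = ∑ s ∈ I, Qs s A := fun A => by simp [T, LinearMap.sum_apply]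
  let Tr : SMat N →L[ℝ] SMat N := LinearMap.toContinuousLinearMap (T.restrictScalars ℝ)
  let u : ℕ → ℝ → SMat N := fun k t => Tr (heis H (Complex.I ^ k • adk H (ψ v) k) t)
  have hu : ∀ k t, u k t = T (heis H (Complex.I ^ k • adk H (ψ v) k) t) := fun k t => rfl
  have hd : ∀ k t, HasDerivAt (u k) (u (k + 1) t) t := by
    intro k t
    have h1 := heis_hasDerivAt H (Complex.I ^ k • adk H (ψ v) k) t
    have h2 := Tr.hasFDerivAt.comp_hasDerivAt t h1
    refine h2.congr_deriv ?_
    change Tr (heis H _ t) = Tr (heis H _ t)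
    congr 2
    rw [adk, mul_smul_comm, smul_mul_assoc, ← smul_sub, smul_smul, pow_succ']
  have hD : 0 ≤ Real.sqrt (2 ^ (N / 2)) := Real.sqrt_nonneg _
  have hb : ∀ k t, k ≤ 4 ^ J * r → ‖u k t‖ ≤
      (Real.sqrt (2 ^ (N / 2)) * M) * (8 ^ k * (k.factorial : ℝ)) := by
    intro k t hk
    rw [mul_assoc]
    refine norm_le_of_nsq_le (by positivity) ?_
    rw [hu, hT]
    refine (hQ.nsq_sum_le h hN I _).trans ?_
    rw [nsq_heis hHh, nsq_smul]
    have := hm k hk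
    have e : (M * (8 ^ k * (k.factorial : ℝ))) ^ 2 = M ^ 2 * (64 ^ k * (k.factorial : ℝ) ^ 2) := by
      rw [mul_pow, mul_pow, ← pow_mul, mul_comm k 2, pow_mul]; norm_num
    rw [e]
    simpa using this
  have h0 : ∀ k, k < 4 ^ J * r → u k 0 = 0 := by
    intro k hk
    rw [hu, heis_zero, map_smul, hT, Finset.sum_eq_zero, smul_zero]
    intro s hs
    refine hQ.kill_low h hN (hI s hs) (lowSpan_mono ?_ (adk_low h ε v k))
    have : k * q ≤ 4 ^ J * r * q := Nat.mul_le_mul_right _ hk.le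
    omega
  have key := chain_bound u hd (A := 8) (M := Real.sqrt (2 ^ (N / 2)) * M) (by norm_num)
    (by positivity) J r hr hb h0 t ht (by norm_num at htJ ⊢; linarith) 0 (by omega)
  rw [← hQ.nsq_sum h hN, ← hT]
  have e0 : u 0 t = T (heis H (ψ v) t) := by
    rw [hu]; simp [adk]
  rw [e0] at key
  have := nsq_le_of_norm_le (A := T (heis H (ψ v) t)) (c := M * (1 / 2) ^ r) (by
    simpa [mul_assoc] using key)
  refine this.trans (le_of_eq ?_)
  rw [mul_pow, ← pow_mul, mul_comm r 2, pow_mul]; norm_num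

end dyn

section final

theorem mem_blockR {N q l s : ℕ} (hq : 4 ≤ q) (hl : l ≤ Nprime N q)
    (hs : s ∈ blockR N q l) : (s + q - 4) / (q - 2) = l := by
  obtain ⟨p, rfl⟩ : ∃ p, q = p + 4 := ⟨q - 4, by omega⟩
  unfold blockR at hs
  have e2 : p + 4 - 2 = p + 2 := by omega
  have e4 : s + (p + 4) - 4 = s + p := by omega
  rw [e2, e4]
  rw [e2] at hs
  split_ifs at hs with h0 h1
  · simp at hs
    subst hs
    rw [h0]
    exact Nat.div_eq_of_lt (by omega)
  · obtain ⟨k, rfl⟩ : ∃ k, l = k + 1 := ⟨l - 1, by omega⟩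
    rw [Finset.mem_Ioc] at hs
    rw [Nat.add_sub_cancel] at hs
    rw [Nat.div_eq_iff (by omega)]
    constructor
    · nlinarith [hs.1]
    · apply Nat.le_sub_of_add_le
      linarith [hs.2]
  · have hlN : l = Nprime N (p + 4) := by omega
    rw [← hlN] at hs
    rw [Finset.mem_Ioc] at hs
    have hN : l = (N + p) / (p + 2) := by
      rw [hlN]; unfold Nprime
      congr 1
    apply le_antisymm
    · rw [hN]
      exact Nat.div_le_div_right (by omega)
    · obtain ⟨k, rfl⟩ : ∃ k, l = k + 1 := ⟨l - 1, by omega⟩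
      rw [Nat.add_sub_cancel] at hs
      rw [Nat.le_div_iff_mul_le (by omega)]
      nlinarith [hs.1, hs.2]

theorem block_sum_le {N q : ℕ} (hq : 4 ≤ q) (w : ℕ → ℝ) (hw : ∀ s, 0 ≤ w s)
    (h1 : ∀ I : Finset ℕ, ∑ s ∈ I, w s ≤ 1) (n0 : ℕ) (η : ℝ)
    (h2 : ∀ I : Finset ℕ, (∀ s ∈ I, 1 + n0 * q < s) → ∑ s ∈ I, w s ≤ η) :
    ∑ l ∈ Finset.range (Nprime N q + 1), (l : ℝ) * ∑ s ∈ blockR N q l, w s ≤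
      2 * n0 + Nprime N q * η := by
  classical
  have hm : ∀ l ∈ Finset.range (Nprime N q + 1), ∀ s ∈ blockR N q l,
      (s + q - 4) / (q - 2) = l := fun l hl s hs =>
    mem_blockR hq (by rw [Finset.mem_range] at hl; omega) hs
  have e1 : ∑ l ∈ Finset.range (Nprime N q + 1), (l : ℝ) * ∑ s ∈ blockR N q l, w s =
      ∑ s ∈ (Finset.range (Nprime N q + 1)).biUnion (blockR N q),
        (((s + q - 4) / (q - 2) : ℕ) : ℝ) * w s := by
    rw [Finset.sum_biUnion]
    · refine Finset.sum_congr rfl fun l hl => ?_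
      rw [Finset.mul_sum]
      refine Finset.sum_congr rfl fun s hs => ?_
      rw [hm l hl s hs]
    · intro l hl l' hl' hne
      rw [Function.onFun, Finset.disjoint_left]
      intro s hs hs'
      exact hne ((hm l hl s hs).symm.trans (hm l' hl' s hs'))
  rw [e1]
  set U := (Finset.range (Nprime N q + 1)).biUnion (blockR N q) with hU
  calc _ ≤ ∑ s ∈ U, (2 * (n0 : ℝ) * w s + Nprime N q * (if 1 + n0 * q < s then w s else 0)) := by
        refine Finset.sum_le_sum fun s hs => ?_
        rw [hU, Finset.mem_biUnion] at hs
        obtain ⟨l, hl, hs⟩ := hs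
        have hml := hm l hl s hs
        rw [hml]
        have hlN : (l : ℝ) ≤ Nprime N q := by
          rw [Finset.mem_range] at hl
          exact_mod_cast (by omega : l ≤ Nprime N q)
        rcases le_or_gt l (2 * n0) with hc | hc
        · have : (l : ℝ) ≤ 2 * n0 := by exact_mod_cast hc
          have h3 : 0 ≤ (Nprime N q : ℝ) * (if 1 + n0 * q < s then w s else 0) := by
            have := hw s
            positivity
          nlinarith [hw s]
        · have hbig : 1 + n0 * q < s := by
            obtain ⟨p, rfl⟩ : ∃ p, q = p + 4 := ⟨q - 4, by omega⟩
            have e2 : p + 4 - 2 = p + 2 := by omega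
            have e4 : s + (p + 4) - 4 = s + p := by omega
            rw [e2, e4] at hml
            have : (2 * n0 + 1) * (p + 2) ≤ s + p := by
              rw [← Nat.le_div_iff_mul_le (by omega)]
              omega
            nlinarith [Nat.zero_le (n0 * p)]
          rw [if_pos hbig]
          have : 0 ≤ 2 * (n0 : ℝ) * w s := by have := hw s; positivity
          nlinarith [hw s]
    _ = 2 * n0 * ∑ s ∈ U, w s + Nprime N q * ∑ s ∈ U with 1 + n0 * q < s, w s := by
        rw [Finset.sum_add_distrib, ← Finset.mul_sum, ← Finset.mul_sum, Finset.sum_filter]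
    _ ≤ 2 * n0 * 1 + Nprime N q * η := by
        have a := h1 U
        have b := h2 (U.filter fun s => 1 + n0 * q < s)
          (fun s hs => (Finset.mem_filter.1 hs).2)
        gcongr
    _ = _ := by ring

theorem markov_union {Ω : Type*} [Fintype Ω] (X : ℕ → Ω → ℝ) (hX : ∀ k ω, 0 ≤ X k ω)
    (a : ℕ → ℝ) (ha : ∀ k, 0 < a k) (C R : ℝ) (hC : 0 ≤ C) (hR : 0 < R)
    (hE : ∀ k, ∑ ω, X k ω ≤ C * a k) (n : ℕ) (G : Ω → Prop)
    (hG : ∀ ω, (∀ k, k ≤ n → X k ω ≤ R * (2 ^ k * a k)) → G ω) :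
    (Fintype.card Ω : ℝ) - 2 * C / R ≤ Nat.card {ω // G ω} := by
  classical
  have h1 : ∀ ω, (1 : ℝ) - (if G ω then 1 else 0) ≤
      ∑ k ∈ Finset.range (n + 1), X k ω / (R * (2 ^ k * a k)) := by
    intro ω
    have hnn : ∀ k ∈ Finset.range (n + 1), 0 ≤ X k ω / (R * (2 ^ k * a k)) := fun k _ => by
      have := hX k ω
      have := ha k
      positivity
    by_cases hg : G ω
    · rw [if_pos hg, sub_self]
      exact Finset.sum_nonneg hnn
    · rw [if_neg hg, sub_zero]
      have : ¬ ∀ k, k ≤ n → X k ω ≤ R * (2 ^ k * a k) := fun hh => hg (hG ω hh)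
      push Not at this
      obtain ⟨k, hk, hlt⟩ := this
      refine le_trans ?_ (Finset.single_le_sum hnn (Finset.mem_range.2 (by omega : k < n + 1)))
      have := ha k
      rw [le_div_iff₀ (by positivity), one_mul]
      exact hlt.le
  have h2 := Finset.sum_le_sum fun ω (_ : ω ∈ Finset.univ) => h1 ω
  rw [Finset.sum_sub_distrib, Finset.sum_comm] at h2
  have h3 : ∑ k ∈ Finset.range (n + 1), ∑ ω, X k ω / (R * (2 ^ k * a k)) ≤ 2 * C / R := by
    have hgeo : ∑ k ∈ Finset.range (n + 1), (1 / 2 : ℝ) ^ k ≤ 2 := by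
      rw [geom_sum_eq (by norm_num)]
      have : (0 : ℝ) ≤ (1 / 2) ^ (n + 1) := by positivity
      rw [div_le_iff_of_neg (by norm_num)]
      linarith
    calc _ ≤ ∑ k ∈ Finset.range (n + 1), C / R * (1 / 2 : ℝ) ^ k := by
          refine Finset.sum_le_sum fun k _ => ?_
          rw [← Finset.sum_div]
          have := ha k
          rw [div_le_iff₀ (by positivity)]
          refine (hE k).trans (le_of_eq ?_)
          have h2 : (1 / 2 : ℝ) ^ k * 2 ^ k = 1 := by rw [← mul_pow]; norm_num
          calc C * a k = C / R * R * ((1 / 2 : ℝ) ^ k * 2 ^ k) * a k := by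
                rw [h2]; field_simp
            _ = _ := by ring
      _ = C / R * ∑ k ∈ Finset.range (n + 1), (1 / 2 : ℝ) ^ k := by rw [Finset.mul_sum]
      _ ≤ C / R * 2 := by gcongr
      _ = _ := by ring
  have h4 : (Nat.card {ω // G ω} : ℝ) = ∑ ω, (if G ω then (1 : ℝ) else 0) := by
    rw [Nat.card_eq_fintype_card, Fintype.card_subtype, Finset.sum_boole]
  have h5 : ∑ _ω : Ω, (1 : ℝ) = Fintype.card Ω := by simp
  rw [h5] at h2
  rw [h4]
  linarith

set_option maxHeartbeats 1000000 in
theorem numerics (γ δ κ : ℝ) (hγ : 0 < γ) (hδ : 0 < δ) (hκ0 : 0 < κ) :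
    ∃ N₀ : ℕ, 0 < N₀ ∧ ∀ N : ℕ, N₀ < N → ∀ q : ℕ, 4 ≤ q → 
      (q : ℝ) < γ * (N : ℝ) ^ ((1 - δ) / 6) → 2 * q < N →
      ∃ J r : ℕ, 1 ≤ r ∧ 1 / 1024 * Real.log N ≤ J * (1 / 64) ∧
        2 * ((4 ^ J * r : ℕ) : ℝ) + Nprime N q * (N * (1 / 4) ^ r) < κ * Nprime N q := by
  have hlog : ∀ᶠ x : ℝ in Filter.atTop, Real.log x ≤ x ^ (1 / 8 : ℝ) := by
    have := (isLittleO_log_rpow_atTop (by norm_num : (0:ℝ) < 1 / 8)).bound (c := 1) one_pos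
    filter_upwards [this, Filter.eventually_ge_atTop 1] with x hx h1
    rw [Real.norm_of_nonneg (Real.log_nonneg h1), one_mul,
      Real.norm_of_nonneg (by positivity)] at hx
    exact hx
  have hbig : ∀ᶠ x : ℝ in Filter.atTop,
      12 * Real.exp 2 * γ / κ < x ^ (1 / 2 : ℝ) :=
    (tendsto_rpow_atTop (by norm_num : (0:ℝ) < 1 / 2)).eventually_gt_atTop _
  have hall := (hlog.and (hbig.and ((Filter.eventually_ge_atTop (4 / κ)).and
    (Filter.eventually_ge_atTop 3))))
  obtain ⟨x0, hx0⟩ := Filter.eventually_atTop.1 hall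
  refine ⟨⌈x0⌉₊ + 1, by omega, ?_⟩
  intro N hN q hq4 hq hqN
  have hNx : x0 ≤ (N : ℝ) := (Nat.le_ceil x0).trans (by exact_mod_cast (by omega : ⌈x0⌉₊ ≤ N))
  obtain ⟨g1, g2, g3, g4⟩ := hx0 N hNx
  set x : ℝ := (N : ℝ) with hx
  have hx1 : 1 ≤ x := by linarith
  have hxpos : 0 < x := by linarith
  set L := Real.log x with hL
  have hLpos : 0 < L := Real.log_pos (by linarith)
  have hexpL : Real.exp L = x := Real.exp_log hxpos
  refine ⟨⌈L / 16⌉₊, ⌈2 * L⌉₊, Nat.one_le_ceil_iff.2 (by linarith), ?_, ?_⟩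
  · have := Nat.le_ceil (L / 16)
    linarith
  set J := ⌈L / 16⌉₊
  set r := ⌈2 * L⌉₊
  have hJ : (J : ℝ) < L / 16 + 1 := Nat.ceil_lt_add_one (by linarith)
  have hr : (r : ℝ) < 2 * L + 1 := Nat.ceil_lt_add_one (by linarith)
  have hr' : 2 * L ≤ r := Nat.le_ceil _
  have he1 : Real.exp 1 ≤ 4 := by linarith [Real.exp_one_lt_d9]
  have he2 : (4 : ℝ) ≤ Real.exp 2 := by
    have h := Real.exp_one_gt_d9
    have : Real.exp 2 = Real.exp 1 * Real.exp 1 := by rw [← Real.exp_add]; norm_num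
    rw [this]; nlinarith
  have h4J : (4 : ℝ) ^ J ≤ Real.exp 2 * x ^ (1 / 8 : ℝ) := by
    calc (4 : ℝ) ^ J ≤ (Real.exp 2) ^ J := by gcongr
      _ = Real.exp (J * 2) := by rw [← Real.exp_nat_mul]
      _ ≤ Real.exp (2 + L * (1 / 8)) := by
          apply Real.exp_le_exp.2; linarith
      _ = _ := by rw [Real.exp_add, Real.rpow_def_of_pos hxpos]
  have h4r : x ^ 2 ≤ (4 : ℝ) ^ r := by
    calc x ^ 2 = Real.exp (2 * L) := by
          rw [← hexpL, ← Real.exp_nat_mul]; norm_num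
      _ ≤ Real.exp (r * 1) := by apply Real.exp_le_exp.2; linarith
      _ = Real.exp 1 ^ r := by rw [← Real.exp_nat_mul]
      _ ≤ _ := by gcongr
  have hη : x * (1 / 4) ^ r ≤ κ / 4 := by
    rw [div_pow, one_pow, mul_one_div, div_le_iff₀ (by positivity)]
    have : 4 ≤ x * κ := by rwa [div_le_iff₀ hκ0] at g3
    nlinarith
  have hqpos : (0 : ℝ) < q := by exact_mod_cast (by omega : 0 < q)
  have hNp : x ≤ q * Nprime N q := by
    have : N ≤ q * Nprime N q := by
      obtain ⟨p, rfl⟩ : ∃ p, q = p + 4 := ⟨q - 4, by omega⟩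
      unfold Nprime
      have e2 : p + 4 - 2 = p + 2 := by omega
      have e4 : N + (p + 4) - 4 = N + p := by omega
      rw [e2, e4]
      have hd := Nat.div_add_mod (N + p) (p + 2)
      have hlt := Nat.mod_lt (N + p) (by omega : p + 2 > 0)
      have h1 : 1 ≤ (N + p) / (p + 2) := by
        rw [Nat.le_div_iff_mul_le (by omega)]; omega
      nlinarith
    rw [hx]; exact_mod_cast this
  have hq' : (q : ℝ) ≤ γ * x ^ (1 / 6 : ℝ) := by
    refine hq.le.trans ?_
    exact mul_le_mul_of_nonneg_left
      (Real.rpow_le_rpow_of_exponent_le hx1 (by linarith)) hγ.le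
  set P : ℝ := (Nprime N q : ℝ)
  have hP0 : 0 < P := by
    by_contra hc
    push Not at hc
    nlinarith
  have hP : x ^ (5 / 6 : ℝ) ≤ γ * P := by
    have e : x = x ^ (5 / 6 : ℝ) * x ^ (1 / 6 : ℝ) := by
      rw [← Real.rpow_add hxpos]; norm_num
    have hpos : 0 < x ^ (1 / 6 : ℝ) := by positivity
    have : x ^ (5 / 6 : ℝ) * x ^ (1 / 6 : ℝ) ≤ (γ * P) * x ^ (1 / 6 : ℝ) := by
      rw [← e]; nlinarith
    exact le_of_mul_le_mul_right this hpos
  have hy1 : 1 ≤ x ^ (1 / 8 : ℝ) := Real.one_le_rpow hx1 (by norm_num)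
  have hmain : 2 * ((4 : ℝ) ^ J * r) < κ / 2 * P := by
    have s1 : (4 : ℝ) ^ J * r ≤ Real.exp 2 * x ^ (1 / 8 : ℝ) * (3 * x ^ (1 / 8 : ℝ)) := by
      have : (r : ℝ) ≤ 3 * x ^ (1 / 8 : ℝ) := by linarith
      gcongr
    have s2 : x ^ (1 / 8 : ℝ) * x ^ (1 / 8 : ℝ) * x ^ (1 / 2 : ℝ) ≤ x ^ (5 / 6 : ℝ) := by
      rw [← Real.rpow_add hxpos, ← Real.rpow_add hxpos]
      exact Real.rpow_le_rpow_of_exponent_le hx1 (by norm_num)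
    rw [div_lt_iff₀ hκ0] at g2
    set y := x ^ (1 / 8 : ℝ)
    set z := x ^ (1 / 2 : ℝ)
    have hy0 : 0 < y * y := by positivity
    have s3 : 12 * Real.exp 2 * γ * (y * y) < κ * (γ * P) := by
      calc 12 * Real.exp 2 * γ * (y * y) < z * κ * (y * y) := by gcongr
        _ = κ * (y * y * z) := by ring
        _ ≤ κ * (γ * P) := mul_le_mul_of_nonneg_left (s2.trans hP) hκ0.le
    have s4 : 12 * Real.exp 2 * (y * y) < κ * P := by
      have : γ * (12 * Real.exp 2 * (y * y)) < γ * (κ * P) := by linarith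
      exact lt_of_mul_lt_mul_left this hγ.le
    nlinarith
  push_cast
  have : P * (x * (1 / 4) ^ r) ≤ P * (κ / 4) := by gcongr
  nlinarith

end final

/-- Fast scrambling in the SYK model: for `q < γ N^{(1−δ)/6}`, with probability at least
`1 − 2(q−2)/(N^ζ − 1)` over the couplings, the operator scrambling time of a single fermion
satisfies `t_{s,κ} ≥ b log N`. -/
theorem syk_fast_scrambling (γ δ κ : ℝ) (hγ : 0 < γ) (hδ : 0 < δ)
    (hκ0 : 0 < κ) (hκ1 : κ < 1) :
    ∃ b : ℝ, 0 < b ∧ ∃ ζ : ℝ, 0 < ζ ∧ ∃ N₀ : ℕ, 0 < N₀ ∧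
      ∀ N : ℕ, N₀ < N → Even N →
      ∀ q : ℕ, Even q → 2 < q → (q : ℝ) < γ * (N : ℝ) ^ ((1 - δ) / 6) →
      ∀ hqN : 2 * q < N,
      ∀ ψ : Fin N → Matrix (Fin (2 ^ (N / 2))) (Fin (2 ^ (N / 2))) ℂ,
      (∀ i, (ψ i).IsHermitian) →
      (∀ i j, ψ i * ψ j + ψ j * ψ i =
        (if i = j then (2 : ℂ) else 0) •
          (1 : Matrix (Fin (2 ^ (N / 2))) (Fin (2 ^ (N / 2))) ℂ)) →
      ∀ Qs : ℕ → (Matrix (Fin (2 ^ (N / 2))) (Fin (2 ^ (N / 2))) ℂ →ₗ[ℂ]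
        Matrix (Fin (2 ^ (N / 2))) (Fin (2 ^ (N / 2))) ℂ),
      (∀ s A, Qs s A ∈ sizeSpan ψ s) →
      (∀ s A, ∀ B ∈ sizeSpan ψ s, mInner N B (A - Qs s A) = 0) →
      1 - 2 * ((q : ℝ) - 2) / ((N : ℝ) ^ ζ - 1) ≤
        (Nat.card {ε : ({X : Finset (Fin N) // X.card = q} → Bool) //
            ∀ t : ℝ, 0 < t →
              κ * (Nprime N q : ℝ) ≤
                ∑ l ∈ Finset.range (Nprime N q + 1), (l : ℝ) *
                  (mInner N (heis (sykH q ψ ε) (ψ ⟨0, by omega⟩) t)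
                    ((∑ s ∈ blockR N q l, Qs s)
                      (heis (sykH q ψ ε) (ψ ⟨0, by omega⟩) t))).re →
              b * Real.log N ≤ t} : ℝ) /
          2 ^ (Nat.card {X : Finset (Fin N) // X.card = q}) := by
  obtain ⟨N₀, hN₀, hnum⟩ := numerics γ δ κ hγ hδ hκ0
  refine ⟨1 / 1024, by norm_num, 1, one_pos, N₀, hN₀, ?_⟩
  intro N hN hNe q hqe hq2 hqlt hqN ψ hherm hanti Qs hmem horth
  have hq4 : 4 ≤ q := by
    obtain ⟨p, rfl⟩ := hqe
    omega
  have h : Maj ψ := ⟨hherm, hanti⟩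
  have hQ : IsProj ψ Qs := ⟨hmem, horth⟩
  obtain ⟨J, r, hr, hJ, hlt⟩ := hnum N hN q hq4 hqlt hqN
  have hNpos : (0 : ℝ) < N := by exact_mod_cast (by omega : 0 < N)
  have hN1 : (1 : ℝ) < N := by exact_mod_cast (by omega : 1 < N)
  have hq4' : (4 : ℝ) ≤ q := by exact_mod_cast hq4
  have key := markov_union (Ω := Edge N q → Bool)
    (fun k ε => nsq (adk (sykH q ψ ε) (ψ ⟨0, by omega⟩) k)) (fun k ε => nsq_nonneg _)
    (fun k => 32 ^ k * (k.factorial : ℝ) ^ 2) (fun k => by positivity)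
    (2 ^ Fintype.card (Edge N q)) N (by positivity) hNpos
    (fun k => moment_le h hqe (by omega) (by omega) ⟨0, by omega⟩ k) (4 ^ J * r)
    (fun ε => ∀ t : ℝ, 0 < t →
              κ * (Nprime N q : ℝ) ≤
                ∑ l ∈ Finset.range (Nprime N q + 1), (l : ℝ) *
                  (mInner N (heis (sykH q ψ ε) (ψ ⟨0, by omega⟩) t)
                    ((∑ s ∈ blockR N q l, Qs s)
                      (heis (sykH q ψ ε) (ψ ⟨0, by omega⟩) t))).re →
              1 / 1024 * Real.log N ≤ t) (by
      intro ε hgood t ht hS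
      by_contra hc
      push Not at hc
      have hsq : Real.sqrt N ^ 2 = N := Real.sq_sqrt hNpos.le
      have hm : ∀ k, k ≤ 4 ^ J * r → nsq (adk (sykH q ψ ε) (ψ ⟨0, by omega⟩) k) ≤
          Real.sqrt N ^ 2 * (64 ^ k * (k.factorial : ℝ) ^ 2) := by
        intro k hk
        refine (hgood k hk).trans (le_of_eq ?_)
        rw [hsq, ← mul_assoc ((2 : ℝ) ^ k), ← mul_pow]
        norm_num
      have htail := fun I hI => tail_bound h hNe hqe hQ ⟨0, by omega⟩ ε (Real.sqrt N)
        (Real.sqrt_nonneg _) J r hr hm (4 ^ J * r * q) le_rfl I hI t ht.le (hc.le.trans hJ)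
      have hone : nsq (heis (sykH q ψ ε) (ψ ⟨0, by omega⟩) t) = 1 := by
        rw [nsq_heis (sykH_herm h hqe ε)]
        refine mInner_self_re_unitary ?_
        rw [h.herm, h.sq]
      have hb := block_sum_le (N := N) hq4
        (fun s => nsq (Qs s (heis (sykH q ψ ε) (ψ ⟨0, by omega⟩) t)))
        (fun s => nsq_nonneg _)
        (fun I => by
          rw [← hQ.nsq_sum h hNe, ← hone]
          exact hQ.nsq_sum_le h hNe I _) (4 ^ J * r) (Real.sqrt N ^ 2 * (1 / 4) ^ r) htail
      simp only [LinearMap.sum_apply, mInner_sum_right, Complex.re_sum, hQ.re_eq] at hS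
      rw [hsq] at hb
      linarith)
  rw [Fintype.card_fun, Fintype.card_bool] at key
  rw [Nat.card_eq_fintype_card (α := {X : Finset (Fin N) // X.card = q}),
    le_div_iff₀ (by positivity)]
  refine le_trans ?_ key
  push_cast
  have hfrac : 2 / (N : ℝ) ≤ 2 * ((q : ℝ) - 2) / ((N : ℝ) ^ (1 : ℝ) - 1) := by
    rw [Real.rpow_one, div_le_div_iff₀ hNpos (by linarith)]
    nlinarith
  have hpow : (0 : ℝ) ≤ 2 ^ Fintype.card (Edge N q) := by positivity
  calc _ ≤ (1 - 2 / (N : ℝ)) * 2 ^ Fintype.card (Edge N q) := by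
        refine mul_le_mul_of_nonneg_right ?_ hpow
        linarith
    _ = _ := by ring
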